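/- arXiv:1812.05580 — 3 statements merged into one kernel-verified Lean document; each statement's English description precedes it below -/
import Mathlib

section
/- For every natural number n, the number of partitions of n for which there exists j ≥ 0 such that each of the odd numbers 1, 3, 5, ..., 2j−1 appears exactly twice, every part greater than 2j appears at most once, and every repeated odd part is among 1, 3, ..., 2j−1, equals the number of partitions of n into parts none of which is congruent to 0, 3, or −3 modulo 7. -/
/-!
Both sides are coefficients of products over the possible parts, on the left summed over `j`, and
the equality of the generating functions is the third Rogers–Selberg identity
`∑ j, q ^ (2 j²) (-q ^ (2 j + 1); q)_∞ / (q²; q²)_j = (q³, q⁴, q⁷; q⁷)_∞ / (q; q)_∞`.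
Multiplied by `(q; q)_∞`, its left-hand side is `(q²; q²)_∞ ∑ j, β j * q ^ (2 j²)` for a Bailey pair
with base `q²` whose `α` is a theta series; Bailey's lemma turns it into another theta series, which
is a product by Jacobi's triple product identity. To compare coefficients of `q ^ n` it is enough to
work where `q` is nilpotent, and there all these sums and products are finite.
-/

open Finset PowerSeries

theorem prod_range_mul {M : Type*} [CommMonoid M] (f : ℕ → M) (m n : ℕ) :
    ∏ i ∈ range (m * n), f i = ∏ i ∈ range n, ∏ j ∈ range m, f (m * i + j) := by
  induction n with
  | zero => simp
  | succ n ih => rw [Nat.mul_succ, prod_range_add, ih, prod_range_succ]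

section QPochhammer

variable {R : Type*} [CommRing R]

/-- The `q`-shifted factorial `(a; q)_n = (1 - a) (1 - a q) ⋯ (1 - a q ^ (n - 1))`. -/
def qPochhammer (a q : R) (n : ℕ) : R :=
  ∏ i ∈ range n, (1 - a * q ^ i)

@[simp]
theorem qPochhammer_zero (a q : R) : qPochhammer a q 0 = 1 :=
  prod_range_zero _

theorem qPochhammer_succ (a q : R) (n : ℕ) :
    qPochhammer a q (n + 1) = qPochhammer a q n * (1 - a * q ^ n) :=
  prod_range_succ _ _

theorem qPochhammer_add (a q : R) (m n : ℕ) :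
    qPochhammer a q (m + n) = qPochhammer a q m * qPochhammer (a * q ^ m) q n := by
  simp only [qPochhammer, prod_range_add, pow_add, mul_assoc]

theorem qPochhammer_two_mul (a q : R) (n : ℕ) :
    qPochhammer a q (2 * n) = qPochhammer a (q ^ 2) n * qPochhammer (a * q) (q ^ 2) n := by
  simp only [qPochhammer, prod_range_mul, ← prod_mul_distrib]
  refine prod_congr rfl fun i _ ↦ ?_
  rw [prod_range_succ, prod_range_one]
  ring

theorem qPochhammer_mul_qPochhammer_neg (a q : R) (n : ℕ) :
    qPochhammer a q n * qPochhammer (-a) q n = qPochhammer (a ^ 2) (q ^ 2) n := by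
  simp only [qPochhammer, ← prod_mul_distrib]
  exact prod_congr rfl fun i _ ↦ by ring

theorem map_qPochhammer {S : Type*} [CommRing S] (φ : R →+* S) (a q : R) (n : ℕ) :
    φ (qPochhammer a q n) = qPochhammer (φ a) (φ q) n := by
  simp [qPochhammer]

theorem qPochhammer_eq_of_pow_eq_zero {a q : R} {N n : ℕ} (hq : q ^ N = 0) (hn : N ≤ n) :
    qPochhammer a q n = qPochhammer a q N := by
  obtain ⟨d, rfl⟩ := Nat.exists_eq_add_of_le hn
  simp [qPochhammer, prod_range_add, pow_add, hq]

theorem isUnit_qPochhammer_self {q : R} (hq : ∀ k ≠ 0, IsUnit (1 - q ^ k)) (n : ℕ) :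
    IsUnit (qPochhammer q q n) := by
  rw [qPochhammer, IsUnit.prod_iff]
  exact fun i _ ↦ pow_succ' q i ▸ hq (i + 1) i.succ_ne_zero

theorem isUnit_one_sub_pow_of_isNilpotent {q : R} (hq : IsNilpotent q) (k : ℕ) (hk : k ≠ 0) :
    IsUnit (1 - q ^ k) :=
  (hq.pow_of_pos hk).isUnit_one_sub

/-- The reciprocal `1 / (q; q)_n`. It has the junk value `0` unless `(q; q)_n` is a unit. -/
noncomputable def qFactorialInv (q : R) (n : ℕ) : R :=
  Ring.inverse (qPochhammer q q n)

@[simp]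
theorem qFactorialInv_zero (q : R) : qFactorialInv q 0 = 1 := by
  simp [qFactorialInv]

theorem qPochhammer_mul_qFactorialInv {q : R} (hq : ∀ k ≠ 0, IsUnit (1 - q ^ k)) (n : ℕ) :
    qPochhammer q q n * qFactorialInv q n = 1 :=
  Ring.mul_inverse_cancel _ (isUnit_qPochhammer_self hq n)

theorem qFactorialInv_eq_mul_succ {q : R} (hq : ∀ k ≠ 0, IsUnit (1 - q ^ k)) (n : ℕ) :
    qFactorialInv q n = (1 - q ^ (n + 1)) * qFactorialInv q (n + 1) := by
  have h := qPochhammer_mul_qFactorialInv hq (n + 1)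
  rw [qPochhammer_succ] at h
  linear_combination (-qFactorialInv q n) * h +
    (1 - q ^ (n + 1)) * qFactorialInv q (n + 1) * qPochhammer_mul_qFactorialInv hq n

theorem qFactorialInv_eq_of_pow_eq_zero {q : R} {N n : ℕ} (hq : q ^ N = 0) (hn : N ≤ n) :
    qFactorialInv q n = qFactorialInv q N :=
  congrArg Ring.inverse (qPochhammer_eq_of_pow_eq_zero hq hn)

end QPochhammer

section BaileyPair

variable {R : Type*} [CommRing R]

/-- Bailey pairs relative to `a = 1`: the relation
`β n = ∑ r ≤ n, α r / ((q; q)_(n - r) (q; q)_(n + r))`. -/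
def IsBaileyPair (q : R) (α β : ℕ → R) : Prop :=
  ∀ n, β n = ∑ r ∈ range (n + 1), α r * qFactorialInv q (n - r) * qFactorialInv q (n + r)

-- Zeilberger's creative telescoping; the certificate `G k m` belongs to the summand `r = k` of the
-- sum of index `n = k + m`.
theorem IsBaileyPair.of_telescoping {q : R} {α β c d : ℕ → R} (G : ℕ → ℕ → R)
    (hc : ∀ n, IsUnit (c n)) (hβ_zero : β 0 = α 0) (hβ_succ : ∀ n, c n * β (n + 1) = d n * β n)
    (hG_zero : ∀ m, c m * (α 0 * qFactorialInv q (m + 1) * qFactorialInv q (m + 1)) -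
      d m * (α 0 * qFactorialInv q m * qFactorialInv q m) = G 0 m)
    (hG_succ : ∀ k m, c (k + 1 + m) *
        (α (k + 1) * qFactorialInv q (m + 1) * qFactorialInv q (2 * k + m + 3)) -
      d (k + 1 + m) * (α (k + 1) * qFactorialInv q m * qFactorialInv q (2 * k + m + 2)) =
        G (k + 1) m - G k (m + 1))
    (hG_last : ∀ n, c n * (α (n + 1) * qFactorialInv q (2 * n + 2)) = -G n 0) :
    IsBaileyPair q α β := by
  have partial_sum (n k : ℕ) (hk : k ≤ n) :
      c n * ∑ r ∈ range (k + 1),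
          α r * qFactorialInv q (n + 1 - r) * qFactorialInv q (n + 1 + r) -
        d n * ∑ r ∈ range (k + 1), α r * qFactorialInv q (n - r) * qFactorialInv q (n + r) =
          G k (n - k) := by
    induction k with
    | zero => simpa using hG_zero n
    | succ k ih =>
      obtain ⟨m, rfl⟩ := Nat.exists_eq_add_of_le hk
      specialize ih (by omega)
      rw [show k + 1 + m - k = m + 1 by omega] at ih
      rw [sum_range_succ _ (k + 1), sum_range_succ _ (k + 1),
        show k + 1 + m + 1 - (k + 1) = m + 1 by omega, Nat.add_sub_cancel_left,
        show k + 1 + m + 1 + (k + 1) = 2 * k + m + 3 by ring,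
        show k + 1 + m + (k + 1) = 2 * k + m + 2 by ring]
      linear_combination ih + hG_succ k m
  intro n
  induction n with
  | zero => simp [hβ_zero]
  | succ n ih =>
    refine (hc n).mul_left_cancel ?_
    have h := partial_sum n n le_rfl
    rw [← ih, Nat.sub_self] at h
    rw [hβ_succ, sum_range_succ, Nat.sub_self, qFactorialInv_zero,
      show n + 1 + (n + 1) = 2 * n + 2 by ring]
    linear_combination -h - hG_last n

/-- The terms of Ramanujan's theta function
`f(-a, -b) = ∑ r : ℤ, (-1) ^ r * a ^ (r * (r + 1) / 2) * b ^ (r * (r - 1) / 2)`,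
where for `0 < r` those of index `r` and `-r` are collected. -/
def thetaTerm (a b : R) (r : ℕ) : R :=
  if r = 0 then 1 else (-1) ^ r * (a * b) ^ r.choose 2 * (a ^ r + b ^ r)

@[simp]
theorem thetaTerm_zero (a b : R) : thetaTerm a b 0 = 1 :=
  if_pos rfl

theorem thetaTerm_succ (a b : R) (r : ℕ) :
    thetaTerm a b (r + 1) =
      -((-1) ^ r * (a * b) ^ r.choose 2) * (a * b) ^ r * (a ^ (r + 1) + b ^ (r + 1)) := by
  rw [thetaTerm, if_neg r.succ_ne_zero, Nat.choose_succ_succ', Nat.choose_one_right]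
  ring

theorem thetaTerm_mul_pow_sq (a b c : R) (r : ℕ) :
    thetaTerm a b r * c ^ (r ^ 2) = thetaTerm (a * c) (b * c) r := by
  have hr : r ^ 2 = 2 * r.choose 2 + r := by
    induction r with
    | zero => rfl
    | succ r ih =>
      rw [Nat.choose_succ_succ', Nat.choose_one_right]
      linarith
  unfold thetaTerm
  split_ifs with h
  · simp [h]
  · rw [hr]
    ring

theorem thetaTerm_eq_zero {a b : R} {N r : ℕ} (h : (a * b) ^ N = 0) (hr : N < r) :
    thetaTerm a b r = 0 := by
  obtain ⟨s, rfl⟩ := Nat.exists_eq_add_one_of_ne_zero (Nat.ne_zero_of_lt hr)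
  rw [thetaTerm_succ, pow_eq_zero_of_le (Nat.lt_succ_iff.mp hr) h, mul_zero, zero_mul]

theorem isBaileyPair_jacobi {a b : R} (hq : ∀ k ≠ 0, IsUnit (1 - (a * b) ^ k)) :
    IsBaileyPair (a * b) (thetaTerm a b) fun n ↦
      qPochhammer a (a * b) n * qPochhammer b (a * b) n * qFactorialInv (a * b) (2 * n) := by
  have hu := qFactorialInv_eq_mul_succ hq
  refine .of_telescoping (c := fun n ↦ (1 - (a * b) ^ (2 * n + 1)) * (1 - (a * b) ^ (2 * n + 2)))
    (d := fun n ↦ (1 - a * (a * b) ^ n) * (1 - b * (a * b) ^ n))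
    (fun k m ↦ (-1) ^ k * (a * b) ^ k.choose 2 *
      (a ^ k * ((a * b) ^ (k + m) * ((a * b) ^ (k + 1) + a) -
          (a * b) ^ (2 * (k + m) + 1) * (a * (a * b) ^ k + 1)) +
        b ^ k * ((a * b) ^ (k + m) * ((a * b) ^ (k + 1) + b) -
          (a * b) ^ (2 * (k + m) + 1) * (b * (a * b) ^ k + 1))) *
      qFactorialInv (a * b) m * qFactorialInv (a * b) (2 * k + m + 1))
    (fun n ↦ (hq _ (by omega)).mul (hq _ (by omega))) (by simp) (fun n ↦ ?_) (fun m ↦ ?_)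
    (fun k m ↦ ?_) (fun n ↦ ?_)
  · rw [qPochhammer_succ, qPochhammer_succ, hu (2 * n), hu (2 * n + 1), Nat.mul_succ]
    ring
  · simp only [thetaTerm_zero, hu m, Nat.choose_zero_succ]
    ring_nf
  · rw [thetaTerm_succ, hu m, hu (2 * k + m + 2), Nat.choose_succ_succ', Nat.choose_one_right,
      show 2 * (k + 1) + m + 1 = 2 * k + m + 3 by ring,
      show 2 * k + (m + 1) + 1 = 2 * k + m + 2 by ring, hu (2 * k + m + 2)]
    ring
  · rw [thetaTerm_succ, qFactorialInv_zero, Nat.add_zero, hu (2 * n + 1)]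
    ring

theorem isBaileyPair_slater {q : R} (hq : ∀ k ≠ 0, IsUnit (1 - q ^ k)) :
    IsBaileyPair (q ^ 2) (thetaTerm q (q ^ 2)) fun n ↦
      qPochhammer q (q ^ 2) n * qFactorialInv (q ^ 2) (2 * n) := by
  have hq2 (k : ℕ) (hk : k ≠ 0) : IsUnit (1 - (q ^ 2) ^ k) := by
    rw [← pow_mul]
    exact hq _ (by omega)
  have hu := qFactorialInv_eq_mul_succ hq2
  have hc (n : ℕ) : IsUnit ((1 + q ^ (2 * n + 1)) * (1 - q ^ (4 * n + 4))) := by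
    have h := hq (2 * (2 * n + 1)) (by omega)
    rw [show 1 - q ^ (2 * (2 * n + 1)) = (1 + q ^ (2 * n + 1)) * (1 - q ^ (2 * n + 1)) by ring] at h
    exact (isUnit_of_mul_isUnit_left h).mul (hq _ (by omega))
  refine .of_telescoping (d := fun _ ↦ 1)
    (fun k m ↦ (-1) ^ k * (q * q ^ 2) ^ k.choose 2 * q ^ (2 * k) *
      (q ^ (2 * (k + m) + 2) * (q ^ (2 * k) + q ^ k) + q ^ (2 * (k + m) + 1) +
        q ^ (4 * (k + m) + 3) * q ^ k) *
      qFactorialInv (q ^ 2) m * qFactorialInv (q ^ 2) (2 * k + m + 1))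
    hc (by simp) (fun n ↦ ?_) (fun m ↦ ?_) (fun k m ↦ ?_) (fun n ↦ ?_)
  · rw [qPochhammer_succ, hu (2 * n), hu (2 * n + 1), Nat.mul_succ]
    ring
  · simp only [thetaTerm_zero, hu m, Nat.choose_zero_succ]
    ring_nf
  · rw [thetaTerm_succ, hu m, hu (2 * k + m + 2), Nat.choose_succ_succ', Nat.choose_one_right,
      show 2 * (k + 1) + m + 1 = 2 * k + m + 3 by ring,
      show 2 * k + (m + 1) + 1 = 2 * k + m + 2 by ring, hu (2 * k + m + 2)]
    ring
  · rw [thetaTerm_succ, qFactorialInv_zero, Nat.add_zero, hu (2 * n + 1)]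
    ring

end BaileyPair

section Limits

variable {R : Type*} [CommRing R]

/-- The Durfee rectangle sum `∑ m ≤ N, q ^ (m * (m + k)) / ((q; q)_m (q; q)_(m + k))`. -/
noncomputable def durfeeSum (q : R) (N k : ℕ) : R :=
  ∑ m ∈ range (N + 1), q ^ (m * (m + k)) * qFactorialInv q m * qFactorialInv q (m + k)

theorem durfeeSum_sub_succ {q : R} {N : ℕ} (hq : q ^ N = 0) (k : ℕ) :
    durfeeSum q N k - durfeeSum q N (k + 1) =
      -q ^ (k + 1) * (durfeeSum q N (k + 1) - durfeeSum q N (k + 2)) := by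
  have hu := qFactorialInv_eq_mul_succ (isUnit_one_sub_pow_of_isNilpotent ⟨N, hq⟩)
  have shift : ∑ m ∈ range (N + 1),
        q ^ (m * (m + k)) * (1 - q ^ m) * qFactorialInv q m * qFactorialInv q (m + k + 1) =
      ∑ m ∈ range (N + 1),
        q ^ ((m + 1) * (m + 1 + k)) * qFactorialInv q m * qFactorialInv q (m + k + 2) := by
    have last : q ^ ((N + 1) * (N + 1 + k)) = 0 := pow_eq_zero_of_le (by nlinarith) hq
    rw [sum_range_succ', sum_range_succ, last]
    simp only [pow_zero, sub_self, mul_zero, zero_mul]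
    congr 1
    refine sum_congr rfl fun m _ ↦ ?_
    rw [hu m, show m + 1 + k + 1 = m + k + 2 by ring]
    ring
  have split : durfeeSum q N k - durfeeSum q N (k + 1) =
      ∑ m ∈ range (N + 1),
        q ^ (m * (m + k)) * (1 - q ^ m) * qFactorialInv q m * qFactorialInv q (m + k + 1) -
      ∑ m ∈ range (N + 1),
        q ^ (m * (m + k) + m + k + 1) * qFactorialInv q m * qFactorialInv q (m + k + 1) := by
    simp only [durfeeSum, ← sum_sub_distrib]
    refine sum_congr rfl fun m _ ↦ ?_
    rw [← add_assoc, hu (m + k)]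
    ring
  rw [split, shift]
  simp only [durfeeSum, ← sum_sub_distrib, mul_sum]
  refine sum_congr rfl fun m _ ↦ ?_
  rw [← add_assoc, ← add_assoc, hu (m + k + 1)]
  ring

theorem durfeeSum_succ {q : R} {N : ℕ} (hq : q ^ N = 0) (k : ℕ) :
    durfeeSum q N (k + 1) = durfeeSum q N k := by
  have pow_dvd (d : ℕ) : ∀ k, q ^ d ∣ durfeeSum q N k - durfeeSum q N (k + 1) := by
    induction d with
    | zero => simp
    | succ d ih =>
      intro k
      rw [durfeeSum_sub_succ hq, pow_succ']
      exact mul_dvd_mul ((dvd_pow_self q k.succ_ne_zero).neg_right) (ih (k + 1))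
  have h := pow_dvd N k
  rw [hq, zero_dvd_iff, sub_eq_zero] at h
  exact h.symm

theorem durfeeSum_eq {q : R} {N : ℕ} (hq : q ^ N = 0) (k : ℕ) :
    durfeeSum q N k = qFactorialInv q N := by
  have const (d : ℕ) : durfeeSum q N (k + d) = durfeeSum q N k := by
    induction d with
    | zero => rfl
    | succ d ih => rw [← add_assoc, durfeeSum_succ hq, ih]
  have tail (m : ℕ) : q ^ ((m + 1) * (m + 1 + (k + N))) = 0 :=
    pow_eq_zero_of_le (by nlinarith) hq
  rw [← const N, durfeeSum, sum_range_succ']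
  simp [tail, qFactorialInv_eq_of_pow_eq_zero hq]

-- Bailey's lemma with all its parameters sent to infinity: after the sums are interchanged, the
-- inner sum of index `r` is a Durfee rectangle sum.
theorem IsBaileyPair.qPochhammer_mul_sum {q : R} {α β : ℕ → R} {N : ℕ}
    (h : IsBaileyPair q α β) (hq : q ^ N = 0) :
    qPochhammer q q N * ∑ j ∈ range (N + 1), β j * q ^ (j ^ 2) =
      ∑ r ∈ range (N + 1), α r * q ^ (r ^ 2) := by
  let f (r m : ℕ) : R :=
    α r * q ^ (r ^ 2) * (q ^ (m * (m + 2 * r)) * qFactorialInv q m * qFactorialInv q (m + 2 * r))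
  have expand_β (j : ℕ) : β j * q ^ (j ^ 2) = ∑ r ∈ range (j + 1), f r (j - r) := by
    rw [h j, sum_mul]
    refine sum_congr rfl fun r hr ↦ ?_
    obtain ⟨m, rfl⟩ := Nat.exists_eq_add_of_le (mem_range_succ_iff.mp hr)
    simp only [f, Nat.add_sub_cancel_left, show r + m + r = m + 2 * r by ring]
    ring
  have inner_sum (r : ℕ) :
      ∑ m ∈ range (N + 1 - r), f r m = α r * q ^ (r ^ 2) * qFactorialInv q N := by
    rw [← durfeeSum_eq hq (2 * r), durfeeSum, mul_sum]
    refine sum_subset (range_mono (Nat.sub_le _ _)) fun m _ hm ↦ ?_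
    have hN : N ≤ r ^ 2 + m * (m + 2 * r) := by
      have : N + 1 ≤ m + r := by simpa [add_comm] using hm
      nlinarith
    have hz : q ^ (r ^ 2) * q ^ (m * (m + 2 * r)) = 0 := by
      rw [← pow_add, pow_eq_zero_of_le hN hq]
    linear_combination (α r * qFactorialInv q m * qFactorialInv q (m + 2 * r)) * hz
  have hN := qPochhammer_mul_qFactorialInv (isUnit_one_sub_pow_of_isNilpotent ⟨N, hq⟩) N
  simp only [expand_β, sum_range_diag_flip, inner_sum, ← sum_mul]
  linear_combination (∑ r ∈ range (N + 1), α r * q ^ (r ^ 2)) * hN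

-- Jacobi's triple product identity, as the case `n = 2 * N` of its finite form: every factor next
-- to a nonzero theta term has then reached its limit.
theorem sum_thetaTerm {a b : R} {N : ℕ} (hq : (a * b) ^ N = 0) :
    ∑ r ∈ range (N + 1), thetaTerm a b r =
      qPochhammer a (a * b) N * qPochhammer b (a * b) N * qPochhammer (a * b) (a * b) N := by
  have hunit := isUnit_one_sub_pow_of_isNilpotent ⟨N, hq⟩
  have summand (r : ℕ) : thetaTerm a b r * qFactorialInv (a * b) (2 * N - r) *
      qFactorialInv (a * b) (2 * N + r) = thetaTerm a b r * qFactorialInv (a * b) N ^ 2 := by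
    rcases le_or_gt r N with hr | hr
    · rw [qFactorialInv_eq_of_pow_eq_zero hq (by omega : N ≤ 2 * N - r),
        qFactorialInv_eq_of_pow_eq_zero hq (by omega : N ≤ 2 * N + r)]
      ring
    · simp only [thetaTerm_eq_zero hq hr, zero_mul]
  have extend : ∑ r ∈ range (2 * N + 1), thetaTerm a b r =
      ∑ r ∈ range (N + 1), thetaTerm a b r :=
    (sum_subset (range_mono (by omega)) fun r _ hr ↦
      thetaTerm_eq_zero hq (by simpa using hr)).symm
  have h := isBaileyPair_jacobi hunit (2 * N)
  simp only [summand, ← sum_mul, extend] at h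
  have stable (c : R) : qPochhammer c (a * b) (2 * N) = qPochhammer c (a * b) N :=
    qPochhammer_eq_of_pow_eq_zero hq (by omega)
  rw [stable a, stable b, qFactorialInv_eq_of_pow_eq_zero hq (by omega)] at h
  have hN := qPochhammer_mul_qFactorialInv hunit N
  generalize qPochhammer (a * b) (a * b) N = P at *
  generalize qFactorialInv (a * b) N = U at *
  generalize ∑ r ∈ range (N + 1), thetaTerm a b r = S at *
  linear_combination (-P ^ 2) * h +
    (qPochhammer a (a * b) N * qPochhammer b (a * b) N * P - S * (P * U + 1)) * hN

theorem qPochhammer_mul_rogersSelberg_summand {x : R} {N : ℕ} (hx : x ^ N = 0) (j : ℕ) :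
    qPochhammer x x N * (qFactorialInv (x ^ 2) j * qPochhammer (-x ^ (2 * j + 1)) x N) =
      qPochhammer (x ^ 2) (x ^ 2) N *
        (qPochhammer x (x ^ 2) j * qFactorialInv (x ^ 2) (2 * j)) := by
  have hx2 := isUnit_one_sub_pow_of_isNilpotent (IsNilpotent.pow_of_pos ⟨N, hx⟩ two_ne_zero)
  have hj := qPochhammer_mul_qFactorialInv hx2 j
  have h2j := qPochhammer_mul_qFactorialInv hx2 (2 * j)
  have split_even : qPochhammer (x ^ 2) (x ^ 2) (2 * j) =
      qPochhammer x (x ^ 2) j * qPochhammer (x ^ 2) (x ^ 2) j * qPochhammer (-x) x (2 * j) := by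
    rw [← qPochhammer_mul_qPochhammer_neg, qPochhammer_two_mul, sq]
  have split_neg : qPochhammer (-x) x (2 * j) * qPochhammer (-x ^ (2 * j + 1)) x N =
      qPochhammer (-x) x N := by
    have h := qPochhammer_add (-x) x (2 * j) N
    rw [qPochhammer_eq_of_pow_eq_zero hx (Nat.le_add_left N (2 * j))] at h
    rw [h, show -x ^ (2 * j + 1) = -x * x ^ (2 * j) by ring]
  refine (isUnit_qPochhammer_self hx2 (2 * j)).mul_left_cancel ?_
  rw [← qPochhammer_mul_qPochhammer_neg x x N, ← split_neg]
  linear_combination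
    (qPochhammer x x N * qFactorialInv (x ^ 2) j * qPochhammer (-x ^ (2 * j + 1)) x N) *
      split_even +
    (qPochhammer x x N * qPochhammer (-x ^ (2 * j + 1)) x N * qPochhammer x (x ^ 2) j *
      qPochhammer (-x) x (2 * j)) * (hj - h2j)

theorem rogersSelberg {x : R} {N : ℕ} (hx : x ^ N = 0) :
    qPochhammer x x N * ∑ j ∈ range (N + 1),
        x ^ (2 * j ^ 2) * qFactorialInv (x ^ 2) j * qPochhammer (-x ^ (2 * j + 1)) x N =
      qPochhammer (x ^ 3) (x ^ 7) N * qPochhammer (x ^ 4) (x ^ 7) N *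
        qPochhammer (x ^ 7) (x ^ 7) N := by
  have hunit := isUnit_one_sub_pow_of_isNilpotent ⟨N, hx⟩
  have pow_eq_zero (k : ℕ) (hk : k ≠ 0) : (x ^ k) ^ N = 0 := by rw [pow_right_comm, hx, zero_pow hk]
  calc
    _ = qPochhammer (x ^ 2) (x ^ 2) N * ∑ j ∈ range (N + 1),
          qPochhammer x (x ^ 2) j * qFactorialInv (x ^ 2) (2 * j) * (x ^ 2) ^ (j ^ 2) := by
      rw [mul_sum, mul_sum]
      refine sum_congr rfl fun j _ ↦ ?_
      linear_combination x ^ (2 * j ^ 2) * qPochhammer_mul_rogersSelberg_summand hx j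
    _ = ∑ r ∈ range (N + 1), thetaTerm x (x ^ 2) r * (x ^ 2) ^ (r ^ 2) :=
      (isBaileyPair_slater hunit).qPochhammer_mul_sum (pow_eq_zero 2 two_ne_zero)
    _ = ∑ r ∈ range (N + 1), thetaTerm (x ^ 3) (x ^ 4) r := by
      simp only [thetaTerm_mul_pow_sq, ← pow_succ', ← pow_add]
    _ = _ := by
      have hq : x ^ 3 * x ^ 4 = x ^ 7 := (pow_add x 3 4).symm
      rw [sum_thetaTerm (by rw [hq]; exact pow_eq_zero 7 (by norm_num)), hq]

end Limits

section PartitionGenFun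

variable {R : Type*} [CommRing R]

/-- The generating function of the partitions into parts of size at most `M`, where a part `p` that
occurs `c` times contributes the weight `coeff c (F p)`. -/
noncomputable def partitionGenFun (F : ℕ → R⟦X⟧) (M : ℕ) : R⟦X⟧ :=
  ∏ i ∈ range M, expand (i + 1) i.succ_ne_zero (F (i + 1))

theorem exists_toFinsuppAntidiag_eq {n M : ℕ} {g : ℕ →₀ ℕ} (hg : g ∈ (Icc 1 M).finsuppAntidiag n)
    (hdvd : ∀ p ∈ Icc 1 M, p ∣ g p) : ∃ π : n.Partition, π.toFinsuppAntidiag = g := by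
  obtain ⟨hsum, hsupp⟩ := mem_finsuppAntidiag.mp hg
  refine ⟨⟨∑ p ∈ Icc 1 M, Multiset.replicate (g p / p) p, fun {i} hi ↦ ?_, ?_⟩, ?_⟩
  · obtain ⟨p, hp, hi⟩ := Multiset.mem_sum.mp hi
    rw [Multiset.eq_of_mem_replicate hi]
    exact (mem_Icc.mp hp).1
  · rw [Multiset.sum_sum, ← hsum]
    refine sum_congr rfl fun p hp ↦ ?_
    rw [Multiset.sum_replicate, smul_eq_mul, Nat.div_mul_cancel (hdvd p hp)]
  · ext p
    by_cases hp : p ∈ Icc 1 M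
    · simp [Nat.Partition.toFinsuppAntidiag, Multiset.count_sum', Multiset.count_replicate, hp,
        Nat.div_mul_cancel (hdvd p hp), -mem_Icc]
    · have hgp : g p = 0 := Finsupp.notMem_support_iff.mp fun h ↦ hp (hsupp h)
      simp [Nat.Partition.toFinsuppAntidiag, Multiset.count_sum', Multiset.count_replicate, hgp]

theorem sum_prod_coeff_count (F : ℕ → R⟦X⟧) {n M : ℕ} (hM : n ≤ M) :
    ∑ π : n.Partition, ∏ p ∈ Icc 1 M, coeff (π.parts.count p) (F p) =
      coeff n (partitionGenFun F M) := by
  let G (p : ℕ) : R⟦X⟧ := mk fun m ↦ if p ∣ m then coeff (m / p) (F p) else 0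
  have expand_eq (i : ℕ) : expand (i + 1) i.succ_ne_zero (F (i + 1)) = G (i + 1) := by
    ext m
    rw [coeff_expand, coeff_mk]
  simp only [partitionGenFun, expand_eq]
  rw [range_eq_Ico, prod_Ico_add' G, zero_add, Ico_add_one_right_eq_Icc, coeff_prod]
  refine sum_of_injOn Nat.Partition.toFinsuppAntidiag
    (Nat.Partition.toFinsuppAntidiag_injective n).injOn
    (fun π _ ↦ finsuppAntidiag_mono (Icc_subset_Icc_right hM) _
      π.toFinsuppAntidiag_mem_finsuppAntidiag) (fun g hg hg' ↦ ?_) fun π _ ↦ ?_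
  · obtain ⟨p, hp, hdvd⟩ : ∃ p ∈ Icc 1 M, ¬p ∣ g p := by
      contrapose! hg'
      simpa using exists_toFinsuppAntidiag_eq hg hg'
    exact prod_eq_zero hp (by rw [coeff_mk, if_neg hdvd])
  · refine prod_congr rfl fun p hp ↦ ?_
    simp [G, Nat.Partition.toFinsuppAntidiag, Nat.mul_div_cancel _ (mem_Icc.mp hp).1]

theorem count_parts_eq_zero {n p : ℕ} (π : n.Partition) (hp : p ∉ Icc 1 n) :
    π.parts.count p = 0 :=
  Multiset.count_eq_zero.mpr fun h ↦ hp (mem_Icc.mpr ⟨π.parts_pos h, π.le_of_mem_parts h⟩)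

theorem card_partition_eq_coeff {C : ℕ → ℕ → Prop} [∀ p c, Decidable (C p c)] {F : ℕ → R⟦X⟧}
    {n M : ℕ} (hF : ∀ p c, coeff c (F p) = if C p c then 1 else 0)
    (hC : ∀ p ∉ Icc 1 M, C p 0) (hM : n ≤ M) :
    (Nat.card {π : n.Partition // ∀ p, C p (π.parts.count p)} : R) =
      coeff n (partitionGenFun F M) := by
  have forall_iff (π : n.Partition) :
      (∀ p, C p (π.parts.count p)) ↔ ∀ p ∈ Icc 1 M, C p (π.parts.count p) := by
    refine ⟨fun h p _ ↦ h p, fun h p ↦ ?_⟩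
    by_cases hp : p ∈ Icc 1 M
    · exact h p hp
    · rw [count_parts_eq_zero π (hp <| Icc_subset_Icc_right hM ·)]
      exact hC p hp
  simp only [← sum_prod_coeff_count F hM, hF, prod_boole, forall_iff, sum_boole,
    Nat.card_eq_fintype_card, Fintype.card_subtype]

theorem expand_mk_one_mul {p : ℕ} (hp : p ≠ 0) : expand p hp (mk 1 : R⟦X⟧) * (1 - X ^ p) = 1 := by
  simpa using congrArg (expand p hp) (mk_one_mul_one_sub_eq_one R)

theorem coeff_eq_of_mk_eq {f g : R⟦X⟧} {n N : ℕ} (hn : n < N)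
    (h : Ideal.Quotient.mk (Ideal.span {X ^ N}) f = Ideal.Quotient.mk (Ideal.span {X ^ N}) g) :
    coeff n f = coeff n g := by
  rw [Ideal.Quotient.eq, Ideal.mem_span_singleton, X_pow_dvd_iff] at h
  exact sub_eq_zero.mp ((map_sub _ f g).symm.trans (h n hn))

theorem card_subtype_exists {α ι : Type*} [Finite α] {P : ι → α → Prop} {s : Finset ι}
    (hP : ∀ i j a, P i a → P j a → i = j) (hs : ∀ i a, P i a → i ∈ s) :
    Nat.card {a // ∃ i, P i a} = ∑ i ∈ s, Nat.card {a // P i a} := by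
  classical
  have := Fintype.ofFinite α
  simp only [Nat.card_eq_fintype_card, Fintype.card_subtype]
  rw [← card_biUnion fun i _ j _ hij ↦ disjoint_filter.mpr fun a _ hi hj ↦ hij (hP i j a hi hj)]
  congr 1
  ext a
  simpa using exists_congr fun i ↦ ⟨fun h ↦ ⟨hs i a h, h⟩, And.right⟩

end PartitionGenFun

section Multiplicities

variable {R : Type*} [CommRing R]

/-- The condition on the multiplicity `c` of a part `p` in a partition counted by `A₃` with
parameter `j`. -/
def IsSelbergMultiplicity (j p c : ℕ) : Prop :=
  (2 * j < p → c ≤ 1) ∧ (Odd p → p < 2 * j → c = 2)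

/-- The generating function of the multiplicities allowed by `IsSelbergMultiplicity`. -/
noncomputable def selbergWeight (R : Type*) [CommRing R] (j p : ℕ) : R⟦X⟧ :=
  if 2 * j < p then 1 + X else if Odd p then X ^ 2 else mk 1

theorem isSelbergMultiplicity_iff {j : ℕ} {m : ℕ → ℕ} :
    ((∀ o, Odd o → o < 2 * j → m o = 2) ∧ (∀ p, 2 * j < p → m p ≤ 1) ∧
      ∀ o, Odd o → 2 ≤ m o → o < 2 * j) ↔ ∀ p, IsSelbergMultiplicity j p (m p) := by
  refine ⟨fun h p ↦ ⟨h.2.1 p, h.1 p⟩, fun h ↦ ⟨fun o ↦ (h o).2, fun p ↦ (h p).1, fun o ho hm ↦ ?_⟩⟩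
  have := (h o).1
  grind

theorem IsSelbergMultiplicity.le {m : ℕ → ℕ} {i j : ℕ}
    (hi : ∀ p, IsSelbergMultiplicity i p (m p)) (hj : ∀ p, IsSelbergMultiplicity j p (m p)) :
    j ≤ i := by
  by_contra! hij
  have at_most_once := (hi (2 * i + 1)).1 (by omega)
  have twice := (hj (2 * i + 1)).2 (odd_two_mul_add_one i) (by omega)
  omega

theorem IsSelbergMultiplicity.le_size {n j : ℕ} {π : n.Partition}
    (h : ∀ p, IsSelbergMultiplicity j p (π.parts.count p)) : j ≤ n := by
  rcases j with _ | j
  · exact n.zero_le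
  · have := (h (2 * j + 1)).2 (odd_two_mul_add_one j) (by omega)
    have := π.le_of_mem_parts (Multiset.count_pos.mp (by omega : 0 < π.parts.count (2 * j + 1)))
    omega

theorem coeff_selbergWeight (j p c : ℕ) [Decidable (IsSelbergMultiplicity j p c)] :
    coeff c (selbergWeight R j p) = if IsSelbergMultiplicity j p c then 1 else 0 := by
  unfold selbergWeight
  have coeff_mk_one : coeff c (mk 1 : R⟦X⟧) = 1 := coeff_mk c 1
  grind [IsSelbergMultiplicity, coeff_one, coeff_X]

theorem partitionGenFun_selbergWeight (j N : ℕ) :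
    partitionGenFun (selbergWeight R j) (2 * j + N) * qPochhammer (X ^ 2) (X ^ 2) j =
      X ^ (2 * j ^ 2) * qPochhammer (-X ^ (2 * j + 1)) X N := by
  let E (i : ℕ) : R⟦X⟧ := expand (i + 1) i.succ_ne_zero (selbergWeight R j (i + 1))
  have large (i : ℕ) : E (2 * j + i) = 1 - -X ^ (2 * j + 1) * X ^ i := by
    simp only [E]
    rw [selbergWeight, if_pos (by omega), map_add, map_one, expand_X]
    ring
  have odd (i : ℕ) (hi : i < j) : E (2 * i) = X ^ (4 * i + 2) := by
    simp only [E]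
    rw [selbergWeight, if_neg (by omega), if_pos (odd_two_mul_add_one i), map_pow, expand_X]
    ring
  have even (i : ℕ) (hi : i < j) : E (2 * i + 1) * (1 - X ^ 2 * (X ^ 2) ^ i) = 1 := by
    simp only [E]
    rw [selbergWeight, if_neg (by omega), if_neg (by grind), ← pow_succ', ← pow_mul]
    exact expand_mk_one_mul _
  have exponent (k : ℕ) : ∑ i ∈ range k, (4 * i + 2) = 2 * k ^ 2 := by
    induction k with
    | zero => rfl
    | succ k ih => rw [sum_range_succ, ih]; ring
  calc
    _ = (∏ i ∈ range j, E (2 * i) * (E (2 * i + 1) * (1 - X ^ 2 * (X ^ 2) ^ i))) *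
          ∏ i ∈ range N, E (2 * j + i) := by
      change (∏ i ∈ range (2 * j + N), E i) * _ = _
      rw [prod_range_add, prod_range_mul, mul_right_comm, qPochhammer, ← prod_mul_distrib]
      simp only [prod_range_succ, range_zero, prod_empty, one_mul, add_zero, mul_assoc]
    _ = (∏ i ∈ range j, X ^ (4 * i + 2)) * ∏ i ∈ range N, (1 - -X ^ (2 * j + 1) * X ^ i) := by
      simp only [large]
      congr 1
      refine prod_congr rfl fun i hi ↦ ?_
      rw [odd i (mem_range.mp hi), even i (mem_range.mp hi), mul_one]
    _ = _ := by rw [prod_pow_eq_pow_sum, exponent, qPochhammer]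

theorem map_partitionGenFun_selbergWeight {S : Type*} [CommRing S] (φ : S⟦X⟧ →+* R) {N : ℕ}
    (hφ : φ X ^ N = 0) (j : ℕ) :
    φ (partitionGenFun (selbergWeight S j) (2 * j + N)) =
      φ X ^ (2 * j ^ 2) * qFactorialInv (φ X ^ 2) j * qPochhammer (-φ X ^ (2 * j + 1)) (φ X) N := by
  have h := congrArg φ (partitionGenFun_selbergWeight (R := S) j N)
  simp only [map_mul, map_qPochhammer, map_pow, map_neg] at h
  have hinv := qPochhammer_mul_qFactorialInv
    (isUnit_one_sub_pow_of_isNilpotent (IsNilpotent.pow_of_pos ⟨N, hφ⟩ two_ne_zero)) j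
  linear_combination qFactorialInv (φ X ^ 2) j * h -
    φ (partitionGenFun (selbergWeight S j) (2 * j + N)) * hinv

/-- The generating function of the multiplicities of the part `p` in partitions into parts that are
not congruent to `0`, `3` or `-3` modulo `7`. -/
noncomputable def modSevenWeight (R : Type*) [CommRing R] (p : ℕ) : R⟦X⟧ :=
  if p % 7 ≠ 0 ∧ p % 7 ≠ 3 ∧ p % 7 ≠ 4 then mk 1 else 1

theorem coeff_modSevenWeight (p c : ℕ) :
    coeff c (modSevenWeight R p) =
      if c ≠ 0 → p % 7 ≠ 0 ∧ p % 7 ≠ 3 ∧ p % 7 ≠ 4 then 1 else 0 := by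
  unfold modSevenWeight
  have coeff_mk_one : coeff c (mk 1 : R⟦X⟧) = 1 := coeff_mk c 1
  grind [coeff_one]

theorem partitionGenFun_modSevenWeight (N : ℕ) :
    partitionGenFun (modSevenWeight R) (7 * N) * qPochhammer X X (7 * N) =
      qPochhammer (X ^ 3) (X ^ 7) N * qPochhammer (X ^ 4) (X ^ 7) N *
        qPochhammer (X ^ 7) (X ^ 7) N := by
  have factor (i : ℕ) :
      expand (i + 1) i.succ_ne_zero (modSevenWeight R (i + 1)) * (1 - X * X ^ i) =
        if (i + 1) % 7 ≠ 0 ∧ (i + 1) % 7 ≠ 3 ∧ (i + 1) % 7 ≠ 4 then 1 else 1 - X ^ (i + 1) := by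
    unfold modSevenWeight
    rw [← pow_succ']
    split_ifs
    · exact expand_mk_one_mul _
    · rw [map_one, one_mul]
  simp only [partitionGenFun, qPochhammer, ← prod_mul_distrib, factor, prod_range_mul]
  refine prod_congr rfl fun i _ ↦ ?_
  simp +decide only [prod_range_succ, prod_range_zero, Nat.add_assoc, Nat.mul_add_mod, ↓reduceIte]
  ring

theorem map_partitionGenFun_modSevenWeight {S : Type*} [CommRing S] (φ : S⟦X⟧ →+* R) {N : ℕ}
    (hφ : φ X ^ N = 0) :
    qPochhammer (φ X) (φ X) N * φ (partitionGenFun (modSevenWeight S) (7 * N)) =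
      qPochhammer (φ X ^ 3) (φ X ^ 7) N * qPochhammer (φ X ^ 4) (φ X ^ 7) N *
        qPochhammer (φ X ^ 7) (φ X ^ 7) N := by
  have h := congrArg φ (partitionGenFun_modSevenWeight (R := S) N)
  simp only [map_mul, map_qPochhammer, map_pow] at h
  rwa [qPochhammer_eq_of_pow_eq_zero hφ (by omega), mul_comm] at h

theorem coeff_sum_partitionGenFun_selbergWeight {n N : ℕ} (hn : n < N) :
    coeff n (∑ j ∈ range (N + 1), partitionGenFun (selbergWeight R j) (2 * j + N)) =
      coeff n (partitionGenFun (modSevenWeight R) (7 * N)) := by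
  refine coeff_eq_of_mk_eq hn ?_
  set φ := Ideal.Quotient.mk (Ideal.span {(X : R⟦X⟧) ^ N})
  have hφ : φ X ^ N = 0 := by
    rw [← map_pow]
    exact Ideal.Quotient.mk_singleton_self _
  refine (isUnit_qPochhammer_self
    (isUnit_one_sub_pow_of_isNilpotent ⟨N, hφ⟩) N).mul_left_cancel ?_
  simp only [map_sum, map_partitionGenFun_selbergWeight φ hφ]
  rw [rogersSelberg hφ, map_partitionGenFun_modSevenWeight φ hφ]

theorem card_isSelbergMultiplicity {n N : ℕ} (hn : n ≤ N) (j : ℕ) :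
    (Nat.card {π : n.Partition // ∀ p, IsSelbergMultiplicity j p (π.parts.count p)} : R) =
      coeff n (partitionGenFun (selbergWeight R j) (2 * j + N)) := by
  classical
  refine card_partition_eq_coeff (fun p c ↦ coeff_selbergWeight j p c)
    (fun p hp ↦ ⟨fun _ ↦ zero_le_one, fun ho hlt ↦ ?_⟩) (by omega)
  exact absurd (mem_Icc.mpr ⟨ho.pos, by omega⟩) hp

theorem card_exists_isSelbergMultiplicity {n N : ℕ} (hn : n ≤ N) :
    (Nat.card {π : n.Partition // ∃ j, ∀ p, IsSelbergMultiplicity j p (π.parts.count p)} : R) =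
      coeff n (∑ j ∈ range (N + 1), partitionGenFun (selbergWeight R j) (2 * j + N)) := by
  rw [card_subtype_exists (s := range (N + 1))
      (P := fun j (π : n.Partition) ↦ ∀ p, IsSelbergMultiplicity j p (π.parts.count p))
      (fun i j π hi hj ↦ le_antisymm (IsSelbergMultiplicity.le hj hi)
        (IsSelbergMultiplicity.le hi hj))
      fun j π h ↦ mem_range_succ_iff.mpr ((IsSelbergMultiplicity.le_size h).trans hn)]
  simp only [Nat.cast_sum, map_sum, card_isSelbergMultiplicity hn]

theorem card_modSeven {n N : ℕ} (hn : n ≤ N) :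
    (Nat.card {π : n.Partition // ∀ p ∈ π.parts, p % 7 ≠ 0 ∧ p % 7 ≠ 3 ∧ p % 7 ≠ 4} : R) =
      coeff n (partitionGenFun (modSevenWeight R) (7 * N)) := by
  rw [← card_partition_eq_coeff coeff_modSevenWeight (by simp) (by omega)]
  simp only [Multiset.count_ne_zero]

end Multiplicities

/-- Interpretation of the third Rogers–Selberg identity: `A₃(n) = C_{3,3}(n)`.
A partition is counted by `A₃(n)` iff there exists `j ≥ 0` such that each odd integer
`1, 3, …, 2j-1` appears exactly twice, every part greater than `2j` appears at most once, and
every repeated odd part is among `1, 3, …, 2j-1`. -/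
theorem A3_eq_C33 (n : ℕ) :
    Nat.card {π : n.Partition //
        ∃ j : ℕ,
          (∀ o, Odd o → o < 2 * j → π.parts.count o = 2) ∧
          (∀ p, 2 * j < p → π.parts.count p ≤ 1) ∧
          (∀ o, Odd o → 2 ≤ π.parts.count o → o < 2 * j)} =
      Nat.card {π : n.Partition //
        ∀ j ∈ π.parts, j % 7 ≠ 0 ∧ j % 7 ≠ 3 ∧ j % 7 ≠ 4} := by
  simp only [isSelbergMultiplicity_iff]
  have h := coeff_sum_partitionGenFun_selbergWeight (R := ℤ) n.lt_succ_self
  rw [← card_exists_isSelbergMultiplicity n.le_succ, ← card_modSeven n.le_succ] at h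
  exact_mod_cast h
end

section
/- For every natural number n, the number of partitions of n in which 1 does not appear as a part and, for every positive integer j, the total number of appearances of j and j+1 together is at most 2, equals the number of partitions of n such that, with 2j the largest repeated part, every positive even integer less than 2j appears at least twice, no odd part less than 2j+2 appears, each odd part appears at most once, and no part greater than 2j is repeated. -/
/-- The largest repeated part of a partition (`0` if no part is repeated). -/
def largestRepeatedPart {n : ℕ} (π : n.Partition) : ℕ :=
  (π.parts.toFinset.filter (fun j => 2 ≤ π.parts.count j)).sup id

/-!
Let `F i s` be the generating series of the partitions with parts `> s`, at most `i` of which equal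
`s + 1`, in which `j` and `j + 1` together appear at most `k` times. Sorting by the multiplicity of
`s + 1` gives the recurrences `F 0 s = F k (s + 1)` and, for `i + 1 + j = k`,
`F (i + 1) s = F i s + X ^ ((i + 1) * (s + 1)) * F j (s + 1)`, and these determine all `F i s`,
since `F k s` agrees with `1` up to degree `s`.

Removing two copies of each of `2, 4, …, 2 * J` from an `A₁` partition with largest repeated part
`2 * J` leaves even parts `≤ 2 * J` and distinct parts `> 2 * J + 1`. So its generating series is
`C 1 1`, where `C a b` is the sum over `J` of
`X ^ (2 * J * (J + a)) * ∏_{i = 1}^J (1 - X ^ (2 * i))⁻¹ * ∏_{m > 2 * J + b} (1 + X ^ m)`.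
Sorting by whether `2 * J + b + 1`, respectively `2 * J`, is a part yields
`C a b = C a (b + 1) + X ^ (b + 1) * C (a + 1) (b + 1)` and
`C a b = C (a + 1) b + X ^ (2 * a + 2) * C (a + 2) (b + 2)`,
so that `C (s + 1) (s + 1)`, `C (s + 1) s` and `C s s` satisfy the recurrences of `F 0 s`, `F 1 s`
and `F 2 s` for `k = 2`. Hence `F 0 0 = C 1 1`.
-/

section WeightSeries

open PowerSeries

variable {α β : Type*}

/-- The generating series of a set `S` with respect to a weight `w`. The coefficients are extended
natural numbers, so that no finiteness of the weight classes is needed. -/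
noncomputable def weightSeries (w : α → ℕ) (S : Set α) : ℕ∞⟦X⟧ :=
  PowerSeries.mk fun n => {x ∈ S | w x = n}.encard

theorem coeff_weightSeries (w : α → ℕ) (S : Set α) (n : ℕ) :
    coeff n (weightSeries w S) = {x ∈ S | w x = n}.encard :=
  coeff_mk _ _

theorem weightSeries_eq_add_sep_not (w : α → ℕ) (S : Set α) (p : α → Prop) :
    weightSeries w S = weightSeries w {x ∈ S | p x} + weightSeries w {x ∈ S | ¬ p x} := by
  ext n
  simp only [map_add, coeff_weightSeries]
  rw [← Set.encard_union_eq]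
  · congr 1
    ext x
    simp only [Set.mem_union, Set.mem_ofPred_eq]
    tauto
  · exact Set.disjoint_left.2 fun x hx hx' => hx'.1.2 hx.1.2

theorem weightSeries_eq_X_pow_mul_of_bijOn {v : α → ℕ} {w : β → ℕ} {S : Set α} {T : Set β}
    {f : α → β} {c : ℕ} (hf : Set.BijOn f S T) (hw : ∀ x ∈ S, w (f x) = v x + c) :
    weightSeries w T = X ^ c * weightSeries v S := by
  ext n
  have himage : {y ∈ T | w y = n} = f '' {x ∈ S | v x + c = n} := by
    rw [← hf.image_eq]
    grind
  rw [coeff_X_pow_mul', coeff_weightSeries, himage,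
    (hf.injOn.mono (Set.sep_subset _ _)).encard_image]
  split_ifs with hc
  · simp only [coeff_weightSeries, eq_tsub_iff_add_eq_of_le hc]
  · rw [Set.encard_eq_zero, Set.sep_eq_empty_iff_mem_false]
    intro x _
    omega

theorem weightSeries_eq_of_bijOn {v : α → ℕ} {w : β → ℕ} {S : Set α} {T : Set β} {f : α → β}
    (hf : Set.BijOn f S T) (hw : ∀ x ∈ S, w (f x) = v x) : weightSeries w T = weightSeries v S := by
  simpa only [pow_zero, one_mul] using weightSeries_eq_X_pow_mul_of_bijOn (c := 0) hf hw

theorem coeff_weightSeries_eq_coeff_one {w : α → ℕ} {S : Set α} {x₀ : α} {n : ℕ} (hx₀ : x₀ ∈ S)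
    (hw : w x₀ = 0) (hlt : ∀ x ∈ S, x ≠ x₀ → n < w x) :
    coeff n (weightSeries w S) = coeff n 1 := by
  rw [coeff_weightSeries, coeff_one]
  split_ifs with hn
  · rw [Set.encard_eq_one]
    exact ⟨x₀, by grind⟩
  · rw [Set.encard_eq_zero]
    grind

theorem natCard_partition_eq_toNat_coeff {S : Set (Multiset ℕ)} (hS : ∀ μ ∈ S, ∀ x ∈ μ, 0 < x)
    (n : ℕ) :
    Nat.card {π : n.Partition // π.parts ∈ S} =
      (coeff n (weightSeries Multiset.sum S)).toNat := by
  have himage : {μ ∈ S | μ.sum = n} = Nat.Partition.parts '' {π : n.Partition | π.parts ∈ S} := by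
    ext μ
    constructor
    · rintro ⟨hμ, hsum⟩
      exact ⟨⟨μ, hS μ hμ _, hsum⟩, hμ, rfl⟩
    · rintro ⟨π, hπ, rfl⟩
      exact ⟨hπ, π.parts_sum⟩
  have hinj : Function.Injective (Nat.Partition.parts (n := n)) := fun _ _ => Nat.Partition.ext
  rw [coeff_weightSeries, himage, hinj.encard_image]
  exact Nat.card_coe_set_eq _

end WeightSeries

section GordonSystem

open PowerSeries

variable {R : Type*} [Semiring R] {k : ℕ} {F H : ℕ → ℕ → R⟦X⟧}

/-- The recurrences and initial conditions satisfied by the generating series `F i s` of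
`gordonFamily k i s`, for `i ≤ k`. -/
structure IsGordonSystem (k : ℕ) (F : ℕ → ℕ → R⟦X⟧) : Prop where
  zero_left : ∀ s, F 0 s = F k (s + 1)
  succ_left : ∀ i j s, i + 1 + j = k →
    F (i + 1) s = F i s + X ^ ((i + 1) * (s + 1)) * F j (s + 1)
  coeff_top : ∀ s n, n ≤ s → coeff n (F k s) = coeff n 1

namespace IsGordonSystem

theorem coeff_congr_of_succ (hF : IsGordonSystem k F) (hH : IsGordonSystem k H) {s n : ℕ}
    (htop : coeff n (F k (s + 1)) = coeff n (H k (s + 1)))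
    (hlow : ∀ m, m + (s + 1) ≤ n → ∀ j ≤ k, coeff m (F j (s + 1)) = coeff m (H j (s + 1))) :
    ∀ i ≤ k, coeff n (F i s) = coeff n (H i s) := by
  intro i hi
  induction i with
  | zero => rw [hF.zero_left, hH.zero_left, htop]
  | succ i ih =>
    obtain ⟨j, hj⟩ := Nat.exists_eq_add_of_le hi
    have hexp : s + 1 ≤ (i + 1) * (s + 1) := Nat.le_mul_of_pos_left _ i.succ_pos
    simp only [hF.succ_left i j s hj.symm, hH.succ_left i j s hj.symm, map_add,
      coeff_X_pow_mul', ih (Nat.le_of_succ_le hi)]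
    split_ifs with hn
    · rw [hlow _ (by omega) j (by omega)]
    · rfl

theorem coeff_congr (hF : IsGordonSystem k F) (hH : IsGordonSystem k H) (d : ℕ) :
    ∀ s n, n ≤ s + d → ∀ i ≤ k, coeff n (F i s) = coeff n (H i s) := by
  induction d with
  | zero =>
    intro s n hn
    refine hF.coeff_congr_of_succ hH ?_ fun m hm => by omega
    rw [hF.coeff_top _ _ (by omega), hH.coeff_top _ _ (by omega)]
  | succ d ih =>
    intro s n hn
    exact hF.coeff_congr_of_succ hH (ih _ _ (by omega) k le_rfl) fun m hm => ih _ _ (by omega)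

theorem unique (hF : IsGordonSystem k F) (hH : IsGordonSystem k H) {i : ℕ} (hi : i ≤ k) (s : ℕ) :
    F i s = H i s :=
  PowerSeries.ext fun n => hF.coeff_congr hH n s n (Nat.le_add_left n s) i hi

end IsGordonSystem

end GordonSystem

section GordonFamily

open PowerSeries

/-- Gordon's partitions restricted to parts greater than `s`: the part `s + 1` appears at most `i`
times, and `j` and `j + 1` together appear at most `k` times. Gordon's `G_{3,1}` is
`gordonFamily 2 0 0`. -/
def gordonFamily (k i s : ℕ) : Set (Multiset ℕ) :=
  {μ | (∀ x ∈ μ, s < x) ∧ μ.count (s + 1) ≤ i ∧ ∀ j, s < j → μ.count j + μ.count (j + 1) ≤ k}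

theorem parts_mem_gordonFamily_iff {n : ℕ} (π : n.Partition) (k i : ℕ) :
    π.parts ∈ gordonFamily k i 0 ↔ π.parts.count 1 ≤ i ∧
      ∀ j, 1 ≤ j → π.parts.count j + π.parts.count (j + 1) ≤ k :=
  and_iff_right fun _ => π.parts_pos

theorem gordonFamily_zero (k s : ℕ) : gordonFamily k 0 s = gordonFamily k k (s + 1) := by
  ext μ
  constructor
  · rintro ⟨hlt, hcount, hadj⟩
    have hnotMem : s + 1 ∉ μ := Multiset.count_eq_zero.1 (Nat.le_zero.1 hcount)
    exact ⟨by grind, by grind, by grind⟩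
  · rintro ⟨hlt, hcount, hadj⟩
    have hzero : μ.count (s + 1) = 0 := Multiset.count_eq_zero.2 fun h => (hlt _ h).false
    exact ⟨by grind, by grind, by grind⟩

theorem bijOn_replicate_add_gordonFamily {k i j : ℕ} (hk : i + j = k) (s : ℕ) :
    Set.BijOn (Multiset.replicate i (s + 1) + ·) (gordonFamily k j (s + 1))
      {μ ∈ gordonFamily k i s | μ.count (s + 1) = i} := by
  refine ⟨?_, (add_right_injective _).injOn, ?_⟩
  · rintro ν ⟨hlt, hcount, hadj⟩
    have hzero : ν.count (s + 1) = 0 := Multiset.count_eq_zero.2 fun h => (hlt _ h).false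
    refine ⟨⟨?_, ?_, ?_⟩, ?_⟩
    · grind [Multiset.mem_replicate]
    all_goals simp only [Multiset.count_add, Multiset.count_replicate]; grind
  · rintro μ ⟨⟨hlt, -, hadj⟩, hi⟩
    refine ⟨μ.filter (· ≠ s + 1), ?_, ?_⟩
    · refine ⟨?_, ?_, ?_⟩
      · grind [Multiset.mem_filter]
      all_goals simp only [Multiset.count_filter]; grind
    · rw [← hi]
      dsimp only
      rw [← Multiset.filter_eq', Multiset.filter_add_not]

theorem weightSeries_gordonFamily_succ {k i j : ℕ} (hk : i + 1 + j = k) (s : ℕ) :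
    weightSeries Multiset.sum (gordonFamily k (i + 1) s) =
      weightSeries Multiset.sum (gordonFamily k i s) +
        X ^ ((i + 1) * (s + 1)) * weightSeries Multiset.sum (gordonFamily k j (s + 1)) := by
  have hle : {μ ∈ gordonFamily k (i + 1) s | ¬ μ.count (s + 1) = i + 1} = gordonFamily k i s := by
    ext μ
    simp only [gordonFamily, Set.mem_ofPred_eq]
    grind
  rw [weightSeries_eq_add_sep_not _ _ fun μ => μ.count (s + 1) = i + 1, hle, add_comm]
  congr 1
  refine weightSeries_eq_X_pow_mul_of_bijOn (bijOn_replicate_add_gordonFamily hk s) fun ν _ => ?_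
  rw [Multiset.sum_add, Multiset.sum_replicate, smul_eq_mul, add_comm]

theorem coeff_weightSeries_gordonFamily {n s : ℕ} (hn : n ≤ s) (k i : ℕ) :
    coeff n (weightSeries Multiset.sum (gordonFamily k i s)) = coeff n 1 := by
  refine coeff_weightSeries_eq_coeff_one (x₀ := 0) ?_ Multiset.sum_zero fun μ hμ hne => ?_
  · simp [gordonFamily]
  · obtain ⟨x, hx⟩ := Multiset.exists_mem_of_ne_zero hne
    have hsx := hμ.1 x hx
    have hxsum := Multiset.le_sum_of_mem hx
    omega

theorem isGordonSystem_gordonFamily (k : ℕ) :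
    IsGordonSystem k fun i s => weightSeries Multiset.sum (gordonFamily k i s) where
  zero_left s := by rw [gordonFamily_zero]
  succ_left _ _ s hk := weightSeries_gordonFamily_succ hk s
  coeff_top _ _ hn := coeff_weightSeries_gordonFamily hn k k

end GordonFamily

section CutPair

open PowerSeries

/-- Pairs `(J, μ)` of a cut `J` and a partition `μ` whose parts up to `2 * J` are even and whose
other parts are distinct and greater than `2 * J + b`. -/
def cutPairs (b : ℕ) : Set (ℕ × Multiset ℕ) :=
  {p | ∀ x ∈ p.2, 0 < x ∧ (x ≤ 2 * p.1 ∧ Even x ∨ 2 * p.1 + b < x ∧ p.2.count x ≤ 1)}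

/-- The weight making `weightSeries (cutWeight a) (cutPairs b)` the series `C a b`. -/
def cutWeight (a : ℕ) (p : ℕ × Multiset ℕ) : ℕ :=
  2 * p.1 * (p.1 + a) + p.2.sum

theorem mem_cutPairs {b J : ℕ} {μ : Multiset ℕ} :
    (J, μ) ∈ cutPairs b ↔
      ∀ x ∈ μ, 0 < x ∧ (x ≤ 2 * J ∧ Even x ∨ 2 * J + b < x ∧ μ.count x ≤ 1) :=
  Iff.rfl

theorem sep_notMem_cutPairs (b : ℕ) :
    {p ∈ cutPairs b | 2 * p.1 + b + 1 ∉ p.2} = cutPairs (b + 1) := by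
  ext ⟨J, μ⟩
  simp only [Set.mem_ofPred_eq, mem_cutPairs]
  constructor
  · rintro ⟨hμ, hnotMem⟩ x hx
    have hne : x ≠ 2 * J + b + 1 := fun h => hnotMem (h ▸ hx)
    exact ⟨(hμ x hx).1, (hμ x hx).2.imp_right fun h => ⟨by omega, h.2⟩⟩
  · intro hμ
    refine ⟨fun x hx => ⟨(hμ x hx).1, (hμ x hx).2.imp_right fun h => ⟨by omega, h.2⟩⟩, fun h => ?_⟩
    have := (hμ _ h).2
    omega

theorem bijOn_cons_cutPairs (b : ℕ) :
    Set.BijOn (fun p => (p.1, (2 * p.1 + b + 1) ::ₘ p.2)) (cutPairs (b + 1))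
      {p ∈ cutPairs b | 2 * p.1 + b + 1 ∈ p.2} := by
  refine ⟨?_, ?_, ?_⟩
  · rintro ⟨J, μ⟩ hμ
    rw [← sep_notMem_cutPairs] at hμ
    obtain ⟨hμ, hnotMem : 2 * J + b + 1 ∉ μ⟩ := hμ
    rw [mem_cutPairs] at hμ
    refine ⟨mem_cutPairs.2 fun x hx => ?_, Multiset.mem_cons_self _ _⟩
    rcases Multiset.mem_cons.1 hx with rfl | hx
    · rw [Multiset.count_cons_self, Multiset.count_eq_zero_of_notMem hnotMem]
      omega
    · rw [Multiset.count_cons_of_ne (by rintro rfl; exact hnotMem hx)]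
      exact hμ x hx
  · rintro ⟨J, μ⟩ - ⟨K, ν⟩ - h
    obtain ⟨rfl : J = K, h⟩ := Prod.mk.inj h
    exact congrArg (Prod.mk J) ((Multiset.cons_inj_right _).1 h)
  · rintro ⟨J, μ⟩ ⟨hμ, hmem⟩
    obtain ⟨ν, rfl : μ = (2 * J + b + 1) ::ₘ ν⟩ := Multiset.exists_cons_of_mem hmem
    rw [mem_cutPairs] at hμ
    refine ⟨(J, ν), ?_, rfl⟩
    rw [← sep_notMem_cutPairs]
    refine ⟨mem_cutPairs.2 fun x hx => ?_, fun h : 2 * J + b + 1 ∈ ν => ?_⟩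
    · exact (hμ x (Multiset.mem_cons_of_mem hx)).imp_right <| Or.imp_right <| And.imp_right
        (Multiset.count_le_count_cons _ _ _).trans
    · have hcount := (hμ (2 * J + b + 1) hmem).2
      have hpos := Multiset.count_pos.2 h
      rw [Multiset.count_cons_self] at hcount
      omega

theorem weightSeries_cutPairs_eq_add_succ_succ (a b : ℕ) :
    weightSeries (cutWeight a) (cutPairs b) =
      weightSeries (cutWeight a) (cutPairs (b + 1)) +
        X ^ (b + 1) * weightSeries (cutWeight (a + 1)) (cutPairs (b + 1)) := by
  rw [weightSeries_eq_add_sep_not _ _ fun p => 2 * p.1 + b + 1 ∈ p.2, sep_notMem_cutPairs, add_comm]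
  congr 1
  refine weightSeries_eq_X_pow_mul_of_bijOn (bijOn_cons_cutPairs b) fun p _ => ?_
  simp only [cutWeight, Multiset.sum_cons]
  ring

theorem bijOn_cons_two_mul_cutPairs (b : ℕ) :
    Set.BijOn (fun p => (p.1, if p.1 = 0 then p.2 else (2 * p.1) ::ₘ p.2)) (cutPairs b)
      {p ∈ cutPairs b | p.1 = 0 ∨ 2 * p.1 ∈ p.2} := by
  refine ⟨?_, ?_, ?_⟩
  · rintro ⟨J, μ⟩ hμ
    rcases eq_or_ne J 0 with rfl | hJ
    · exact ⟨hμ, Or.inl rfl⟩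
    · simp only [if_neg hJ]
      refine ⟨mem_cutPairs.2 fun x hx => ?_, Or.inr (Multiset.mem_cons_self _ _)⟩
      rw [mem_cutPairs] at hμ
      rcases Multiset.mem_cons.1 hx with rfl | hx
      · exact ⟨by omega, Or.inl ⟨le_rfl, even_two_mul J⟩⟩
      · refine (hμ x hx).imp_right <| Or.imp_right fun h => ⟨h.1, ?_⟩
        rw [Multiset.count_cons_of_ne (by omega)]
        exact h.2
  · rintro ⟨J, μ⟩ - ⟨K, ν⟩ - h
    obtain ⟨rfl : J = K, h⟩ := Prod.mk.inj h
    split_ifs at h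
    · exact congrArg (Prod.mk J) h
    · exact congrArg (Prod.mk J) ((Multiset.cons_inj_right _).1 h)
  · rintro ⟨J, μ⟩ ⟨hμ, hmem⟩
    rcases eq_or_ne J 0 with rfl | hJ
    · exact ⟨(0, μ), hμ, rfl⟩
    · obtain ⟨ν, rfl : μ = (2 * J) ::ₘ ν⟩ := Multiset.exists_cons_of_mem (hmem.resolve_left hJ)
      refine ⟨(J, ν), fun x hx => ?_, by simp only [if_neg hJ]⟩
      exact (hμ x (Multiset.mem_cons_of_mem hx)).imp_right <| Or.imp_right <| And.imp_right
        (Multiset.count_le_count_cons _ _ _).trans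

theorem bijOn_succ_fst_cutPairs (b : ℕ) :
    Set.BijOn (Prod.map (· + 1) id) (cutPairs (b + 2))
      {p ∈ cutPairs b | ¬ (p.1 = 0 ∨ 2 * p.1 ∈ p.2)} := by
  refine ⟨?_, ((add_left_injective 1).prodMap Function.injective_id).injOn, ?_⟩
  · rintro ⟨J, μ⟩ hμ
    rw [mem_cutPairs] at hμ
    refine ⟨mem_cutPairs.2 fun x hx => (hμ x hx).imp_right ?_, ?_⟩
    · dsimp only
      exact Or.imp (fun h => ⟨by omega, h.2⟩) fun h => ⟨by omega, h.2⟩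
    · rintro (hzero | hmem)
      · exact Nat.succ_ne_zero J hzero
      · have := (hμ (2 * (J + 1)) hmem).2
        omega
  · rintro ⟨J, μ⟩ ⟨hμ, hnot⟩
    obtain ⟨hJ : J ≠ 0, hnotMem : 2 * J ∉ μ⟩ := not_or.1 hnot
    obtain ⟨K, rfl⟩ := Nat.exists_eq_succ_of_ne_zero hJ
    rw [mem_cutPairs] at hμ
    refine ⟨(K, μ), mem_cutPairs.2 fun x hx => (hμ x hx).imp_right ?_, rfl⟩
    have hne : x ≠ 2 * (K + 1) := fun h => hnotMem (h ▸ hx)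
    simp only [Nat.even_iff]
    omega

theorem weightSeries_cutPairs_eq_add_succ_left (a b : ℕ) :
    weightSeries (cutWeight a) (cutPairs b) =
      weightSeries (cutWeight (a + 1)) (cutPairs b) +
        X ^ (2 * a + 2) * weightSeries (cutWeight (a + 2)) (cutPairs (b + 2)) := by
  rw [weightSeries_eq_add_sep_not _ _ fun p => p.1 = 0 ∨ 2 * p.1 ∈ p.2]
  congr 1
  · refine weightSeries_eq_of_bijOn (bijOn_cons_two_mul_cutPairs b) fun p _ => ?_
    by_cases hp : p.1 = 0
    · simp only [cutWeight, hp, if_true, mul_zero, zero_mul]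
    · simp only [cutWeight, hp, if_false, Multiset.sum_cons]
      ring
  · refine weightSeries_eq_X_pow_mul_of_bijOn (bijOn_succ_fst_cutPairs b) fun p _ => ?_
    simp only [cutWeight, Prod.map_fst, Prod.map_snd, id]
    ring

theorem coeff_weightSeries_cutPairs {a b n : ℕ} (ha : n ≤ a) (hb : n ≤ b) :
    coeff n (weightSeries (cutWeight a) (cutPairs b)) = coeff n 1 := by
  refine coeff_weightSeries_eq_coeff_one (x₀ := (0, 0)) ?_ (by simp [cutWeight]) ?_
  · simp [mem_cutPairs]
  · rintro ⟨J, μ⟩ hμ hne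
    change n < 2 * J * (J + a) + μ.sum
    rcases eq_or_ne J 0 with rfl | hJ
    · obtain ⟨x, hx⟩ := Multiset.exists_mem_of_ne_zero (s := μ) fun h => hne (h ▸ rfl)
      have hbx := mem_cutPairs.1 hμ x hx
      have hxsum := Multiset.le_sum_of_mem hx
      omega
    · have hle : J + a ≤ 2 * J * (J + a) := Nat.le_mul_of_pos_left _ (by omega)
      omega

/-- The series `C a b`, arranged as the solution of the recurrences of `IsGordonSystem 2`. -/
noncomputable def cutSeries : ℕ → ℕ → ℕ∞⟦X⟧
  | 0, s => weightSeries (cutWeight (s + 1)) (cutPairs (s + 1))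
  | 1, s => weightSeries (cutWeight (s + 1)) (cutPairs s)
  | _, s => weightSeries (cutWeight s) (cutPairs s)

theorem isGordonSystem_cutSeries : IsGordonSystem 2 cutSeries where
  zero_left _ := rfl
  succ_left i j s hij := by
    obtain ⟨rfl, rfl⟩ | ⟨rfl, rfl⟩ : i = 0 ∧ j = 1 ∨ i = 1 ∧ j = 0 := by omega
    · rw [zero_add, one_mul]
      exact weightSeries_cutPairs_eq_add_succ_succ (s + 1) s
    · exact weightSeries_cutPairs_eq_add_succ_left s s
  coeff_top _ _ hn := coeff_weightSeries_cutPairs hn hn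

end CutPair

section DoubledEvens

/-- Two copies of each of `2, 4, …, 2 * J`. -/
def doubledEvens (J : ℕ) : Multiset ℕ :=
  2 • (Multiset.range J).map fun i => 2 * (i + 1)

theorem sum_doubledEvens (J : ℕ) : (doubledEvens J).sum = 2 * J * (J + 1) := by
  rw [doubledEvens, Multiset.sum_nsmul, smul_eq_mul]
  induction J with
  | zero => rfl
  | succ J ih =>
    rw [Multiset.range_succ, Multiset.map_cons, Multiset.sum_cons, mul_add, ih]
    ring

theorem count_doubledEvens (J x : ℕ) :
    (doubledEvens J).count x = if 0 < x ∧ x ≤ 2 * J ∧ Even x then 2 else 0 := by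
  have hnodup : ((Multiset.range J).map fun i => 2 * (i + 1)).Nodup :=
    (Multiset.nodup_range J).map fun i j h => by omega
  have hmem : (x ∈ (Multiset.range J).map fun i => 2 * (i + 1)) ↔ 0 < x ∧ x ≤ 2 * J ∧ Even x := by
    simp only [Multiset.mem_map, Multiset.mem_range, Nat.even_iff]
    exact ⟨by omega, fun h => ⟨x / 2 - 1, by omega⟩⟩
  rw [doubledEvens, Multiset.count_nsmul, Multiset.count_eq_of_nodup hnodup, mul_ite]
  simp only [hmem, mul_one, mul_zero]

/-- Adds two copies of each of `2, 4, …, 2 * J` to the partition of a pair `(J, μ)`. -/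
def addDoubledEvens (p : ℕ × Multiset ℕ) : Multiset ℕ :=
  doubledEvens p.1 + p.2

theorem count_addDoubledEvens (J x : ℕ) (μ : Multiset ℕ) :
    (addDoubledEvens (J, μ)).count x =
      (if 0 < x ∧ x ≤ 2 * J ∧ Even x then 2 else 0) + μ.count x := by
  rw [addDoubledEvens, Multiset.count_add, count_doubledEvens]

theorem count_addDoubledEvens_le_one {b J x : ℕ} {μ : Multiset ℕ} (hμ : (J, μ) ∈ cutPairs b)
    (hx : 2 * J < x) : (addDoubledEvens (J, μ)).count x ≤ 1 := by
  rw [count_addDoubledEvens, if_neg (by omega), zero_add]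
  by_cases hmem : x ∈ μ
  · have := (mem_cutPairs.1 hμ x hmem).2
    omega
  · simp [hmem]

theorem two_le_count_addDoubledEvens {J x : ℕ} (μ : Multiset ℕ) (h0 : 0 < x) (hx : x ≤ 2 * J)
    (heven : Even x) : 2 ≤ (addDoubledEvens (J, μ)).count x := by
  rw [count_addDoubledEvens, if_pos ⟨h0, hx, heven⟩]
  exact Nat.le_add_right _ _

theorem injOn_addDoubledEvens (b : ℕ) : Set.InjOn addDoubledEvens (cutPairs b) := by
  have hle : ∀ p ∈ cutPairs b, ∀ q, addDoubledEvens p = addDoubledEvens q → q.1 ≤ p.1 := by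
    rintro ⟨J, μ⟩ hμ ⟨K, ν⟩ h
    by_contra! hlt
    have hone := count_addDoubledEvens_le_one hμ (x := 2 * K) (by omega)
    have htwo := two_le_count_addDoubledEvens ν (by omega) le_rfl (even_two_mul K)
    rw [h] at hone
    omega
  rintro ⟨J, μ⟩ hμ ⟨K, ν⟩ hν h
  obtain rfl : J = K := (hle _ hν _ h.symm).antisymm (hle _ hμ _ h)
  exact congrArg (Prod.mk J) (add_right_injective _ h)

theorem pos_of_mem_addDoubledEvens {b : ℕ} {p : ℕ × Multiset ℕ} (hp : p ∈ cutPairs b) :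
    ∀ x ∈ addDoubledEvens p, 0 < x := by
  intro x hx
  rcases Multiset.mem_add.1 hx with hx | hx
  · rw [← Multiset.count_pos, count_doubledEvens] at hx
    by_contra! h0
    rw [if_neg (by omega)] at hx
    exact hx.false
  · exact (hp x hx).1

theorem weightSeries_image_addDoubledEvens (b : ℕ) :
    weightSeries Multiset.sum (addDoubledEvens '' cutPairs b) =
      weightSeries (cutWeight 1) (cutPairs b) := by
  refine weightSeries_eq_of_bijOn (injOn_addDoubledEvens b).bijOn_image fun p _ => ?_
  rw [addDoubledEvens, Multiset.sum_add, sum_doubledEvens, cutWeight]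

end DoubledEvens

section LargestRepeatedPart

variable {n : ℕ} {π : n.Partition}

theorem le_largestRepeatedPart {x : ℕ} (hx : 2 ≤ π.parts.count x) :
    x ≤ largestRepeatedPart π := by
  have hmem : x ∈ π.parts := Multiset.count_pos.1 (by omega)
  exact Finset.le_sup (f := id) (Finset.mem_filter.2 ⟨Multiset.mem_toFinset.2 hmem, hx⟩)

theorem two_le_count_largestRepeatedPart (h : largestRepeatedPart π ≠ 0) :
    2 ≤ π.parts.count (largestRepeatedPart π) := by
  obtain hempty | hne := (π.parts.toFinset.filter fun j => 2 ≤ π.parts.count j).eq_empty_or_nonempty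
  · rw [largestRepeatedPart, hempty] at h
    exact absurd rfl h
  · obtain ⟨x, hx, hsup⟩ := Finset.exists_mem_eq_sup _ hne id
    rw [largestRepeatedPart, hsup]
    exact (Finset.mem_filter.1 hx).2

theorem largestRepeatedPart_eq_two_mul_of_addDoubledEvens_eq {b J : ℕ} {μ : Multiset ℕ}
    (hμ : (J, μ) ∈ cutPairs b) (h : addDoubledEvens (J, μ) = π.parts) :
    largestRepeatedPart π = 2 * J := by
  apply le_antisymm
  · by_contra! hlt
    have hone := count_addDoubledEvens_le_one hμ hlt
    have htwo := two_le_count_largestRepeatedPart (π := π) (by omega)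
    rw [h] at hone
    omega
  · rcases Nat.eq_zero_or_pos J with rfl | hJ
    · exact Nat.zero_le _
    · have htwo := two_le_count_addDoubledEvens μ (by omega) le_rfl (even_two_mul J)
      exact le_largestRepeatedPart (h ▸ htwo)

end LargestRepeatedPart

section IsA1

variable {n : ℕ} {π : n.Partition}

/-- The conditions defining the family `A₁`. -/
def IsA1 (π : n.Partition) : Prop :=
  (∀ j, Odd j → π.parts.count j ≤ 1) ∧
    (∀ j, Odd j → j < largestRepeatedPart π + 2 → π.parts.count j = 0) ∧
    (∀ j, Even j → 0 < j → j < largestRepeatedPart π → 2 ≤ π.parts.count j)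

theorem isA1_of_addDoubledEvens_eq {J : ℕ} {μ : Multiset ℕ} (hμ : (J, μ) ∈ cutPairs 1)
    (h : addDoubledEvens (J, μ) = π.parts) : IsA1 π := by
  have hodd : ∀ j, Odd j → j < 2 * J + 2 → π.parts.count j = 0 := by
    intro j hj hlt
    have hnotMem : j ∉ μ := fun hmem => by
      have := (mem_cutPairs.1 hμ j hmem).2.resolve_left fun h => Nat.not_even_iff_odd.2 hj h.2
      omega
    rw [← h, count_addDoubledEvens, if_neg fun h => Nat.not_even_iff_odd.2 hj h.2.2, zero_add,
      Multiset.count_eq_zero_of_notMem hnotMem]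
  rw [IsA1, largestRepeatedPart_eq_two_mul_of_addDoubledEvens_eq hμ h]
  refine ⟨fun j hj => ?_, hodd, fun j hj h0 hlt => ?_⟩
  · rcases lt_or_ge j (2 * J + 2) with hlt | hge
    · exact (hodd j hj hlt).le.trans zero_le_one
    · exact h ▸ count_addDoubledEvens_le_one hμ (by omega)
  · exact h ▸ two_le_count_addDoubledEvens μ h0 hlt.le hj

namespace IsA1

theorem even_largestRepeatedPart (h : IsA1 π) : Even (largestRepeatedPart π) := by
  by_contra hodd
  rw [Nat.not_even_iff_odd] at hodd
  have hone := h.1 _ hodd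
  have htwo := two_le_count_largestRepeatedPart hodd.pos.ne'
  omega

theorem doubledEvens_le_parts (h : IsA1 π) {J : ℕ} (hJ : largestRepeatedPart π = 2 * J) :
    doubledEvens J ≤ π.parts := by
  rw [Multiset.le_iff_count]
  intro x
  rw [count_doubledEvens]
  split_ifs with hx
  · obtain ⟨h0, hle, heven⟩ := hx
    rcases hle.lt_or_eq with hlt | heq
    · exact h.2.2 x heven h0 (hJ ▸ hlt)
    · rw [heq, ← hJ]
      exact two_le_count_largestRepeatedPart (by omega)
  · exact Nat.zero_le _

theorem mem_cutPairs_of_addDoubledEvens_eq (h : IsA1 π) {J : ℕ} {μ : Multiset ℕ}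
    (hJ : largestRepeatedPart π = 2 * J) (hμ : addDoubledEvens (J, μ) = π.parts) :
    (J, μ) ∈ cutPairs 1 := by
  rw [mem_cutPairs]
  intro x hx
  have hle : μ.count x ≤ π.parts.count x := by
    rw [← hμ, count_addDoubledEvens]
    exact Nat.le_add_left _ _
  have hpos : 0 < π.parts.count x := (Multiset.count_pos.2 hx).trans_le hle
  have heven : x < 2 * J + 2 → Even x := fun hlt => by
    by_contra hodd
    exact hpos.ne' (h.2.1 x (Nat.not_even_iff_odd.1 hodd) (hJ ▸ hlt))
  refine ⟨π.parts_pos (Multiset.count_pos.1 hpos), ?_⟩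
  rcases le_or_gt x (2 * J) with hxJ | hxJ
  · exact Or.inl ⟨hxJ, heven (by omega)⟩
  · refine Or.inr ⟨?_, ?_⟩
    · by_contra! hxJ'
      obtain ⟨r, rfl⟩ := even_iff_exists_two_mul.1 (heven (by omega))
      omega
    · by_contra! hcount
      have := le_largestRepeatedPart (hcount.trans_le hle)
      omega

end IsA1

theorem parts_mem_image_addDoubledEvens_iff :
    π.parts ∈ addDoubledEvens '' cutPairs 1 ↔ IsA1 π := by
  constructor
  · rintro ⟨⟨J, μ⟩, hμ, h⟩
    exact isA1_of_addDoubledEvens_eq hμ h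
  · intro h
    obtain ⟨J, hJ⟩ := even_iff_exists_two_mul.1 h.even_largestRepeatedPart
    obtain ⟨μ, hμ⟩ := Multiset.le_iff_exists_add.1 (h.doubledEvens_le_parts hJ)
    exact ⟨(J, μ), h.mem_cutPairs_of_addDoubledEvens_eq hJ hμ.symm, hμ.symm⟩

end IsA1

/-- The bijection `f : 𝒢₁ → 𝒜₁`: the number of partitions of `n` counted by Gordon's
`G_{3,1}(n)` (no part equal to `1`, and `j` and `j+1` together appear at most twice) equals
the number counted by `A₁(n)`. -/
theorem G31_eq_A1 (n : ℕ) :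
    Nat.card {π : n.Partition //
        π.parts.count 1 = 0 ∧
        (∀ j, 1 ≤ j → π.parts.count j + π.parts.count (j + 1) ≤ 2)} =
      Nat.card {π : n.Partition //
        (∀ j, Odd j → π.parts.count j ≤ 1) ∧
        (∀ j, Odd j → j < largestRepeatedPart π + 2 → π.parts.count j = 0) ∧
        (∀ j, Even j → 0 < j → j < largestRepeatedPart π → 2 ≤ π.parts.count j)} := by
  have hseries : weightSeries Multiset.sum (gordonFamily 2 0 0) =
      weightSeries Multiset.sum (addDoubledEvens '' cutPairs 1) :=
    ((isGordonSystem_gordonFamily 2).unique isGordonSystem_cutSeries zero_le_two 0).trans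
      (weightSeries_image_addDoubledEvens 1).symm
  have hG := natCard_partition_eq_toNat_coeff (fun μ (hμ : μ ∈ gordonFamily 2 0 0) => hμ.1) n
  have hA := natCard_partition_eq_toNat_coeff
    (Set.forall_mem_image.2 fun p hp => pos_of_mem_addDoubledEvens (b := 1) hp) n
  simp only [parts_mem_gordonFamily_iff, nonpos_iff_eq_zero] at hG
  simp only [parts_mem_image_addDoubledEvens_iff, IsA1] at hA
  rw [hG, hA, hseries]
end

section
/- For every natural number n, the number of partitions of n in which, for every positive integer j, the total number of appearances of j and j+1 together is at most 2, equals the number of partitions of n for which there exists j ≥ 0 such that each odd integer 1, 3, ..., 2j−1 appears exactly twice, no odd integer greater than 2j−1 is repeated, and no part greater than 2j appears more than once. -/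
/-!
A Gordon partition has zero, one or two ones. Deleting them and lowering the other parts, by one if
there were at most one `1` and by two if there were two (then there is no `2`), leaves a smaller
Gordon partition, so every Gordon partition is produced from the empty one by a unique word in the
three inverse operations. The words that occur are those in which adding no one is not performed on
the empty partition and adding a single one does not come right after adding two.

A partition of the second family amounts to a number `j`, the multiset of halves of its even parts
up to `2 * j`, and the set of its larger parts lowered by `2 * j`. Three operations on such triples
(increase `j`; raise the larger parts by one and insert the part `2 * j`, if positive; raise the
larger parts by one and insert `2 * j + 1`) generate them by exactly the same words. When `2 * j`
plus the number of parts above `2 * j` plays the role of the number of parts of a Gordon partition,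
both sets of operations change length and sum in the same way. Hence reading a word in either system
gives a bijection that preserves the sum.
-/

/-- The three operations that generate both families: `pair` adds two ones, `shift` none, and
`single` one. The names refer to their effect on Gordon partitions, where the old parts are
increased to make room; see `gordonApply` and `A3Code.apply`. -/
inductive Step
  | pair
  | shift
  | single

namespace Step

/-- The effect of an operation on the pair `(length, size)` of an object. -/
def grow : Step → ℕ × ℕ → ℕ × ℕ
  | pair, (m, n) => (m + 2, n + 2 * m + 2)
  | shift, (m, n) => (m, n + m)
  | single, (m, n) => (m + 1, n + m + 1)

/-- Which operations may come after a given last operation; `none` stands for the empty object. -/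
def CanFollow : Step → Option Step → Prop
  | pair, _ => True
  | shift, p => p ≠ none
  | single, p => p ≠ some pair

theorem snd_lt_snd_grow {s : Step} {g : ℕ × ℕ} (h : s = shift → g.1 ≠ 0) :
    g.2 < (s.grow g).2 := by
  obtain ⟨m, n⟩ := g
  cases s with
  | pair | single => simp only [grow]; omega
  | shift => exact Nat.lt_add_of_pos_right (Nat.pos_of_ne_zero (h rfl))

end Step

/-- A word of operations, the last performed at the head, in which each operation is allowed to
follow the ones performed before it. -/
def IsStepWord : List Step → Prop
  | [] => True
  | s :: w => s.CanFollow w.head? ∧ IsStepWord w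

/-- A class of objects `Mem` freely generated from `nil` by the three operations, subject only to
`Step.CanFollow`; `last` reads off the operation that produced an object, and `grade` is the pair
`(length, size)`. -/
structure StepSystem (α : Type*) where
  Mem : α → Prop
  nil : α
  apply : Step → α → α
  last : α → Option Step
  grade : α → ℕ × ℕ
  mem_nil : Mem nil
  mem_apply : ∀ {s x}, Mem x → s.CanFollow (last x) → Mem (apply s x)
  last_eq_none_iff : ∀ {x}, Mem x → (last x = none ↔ x = nil)
  last_apply : ∀ {s x}, Mem x → s.CanFollow (last x) → last (apply s x) = some s
  exists_apply_eq : ∀ {s x}, Mem x → last x = some s →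
    ∃ y, Mem y ∧ s.CanFollow (last y) ∧ apply s y = x
  apply_injective : ∀ s, Function.Injective (apply s)
  grade_nil : grade nil = (0, 0)
  grade_apply : ∀ s x, grade (apply s x) = s.grow (grade x)
  eq_nil_of_length_eq_zero : ∀ {x}, Mem x → (grade x).1 = 0 → x = nil

namespace StepSystem

variable {α β : Type*} (S : StepSystem α) (T : StepSystem β)

/-- The object obtained from `nil` by performing the operations of a word. -/
def eval (w : List Step) : α :=
  w.foldr S.apply S.nil

theorem mem_eval_and_last_eval {w : List Step} (hw : IsStepWord w) :
    S.Mem (S.eval w) ∧ S.last (S.eval w) = w.head? := by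
  induction w with
  | nil => exact ⟨S.mem_nil, (S.last_eq_none_iff S.mem_nil).2 rfl⟩
  | cons s w ih =>
    obtain ⟨hmem, hlast⟩ := ih hw.2
    have hs : s.CanFollow (S.last (S.eval w)) := hlast ▸ hw.1
    exact ⟨S.mem_apply hmem hs, S.last_apply hmem hs⟩

theorem grade_eval (w : List Step) : S.grade (S.eval w) = w.foldr Step.grow (0, 0) := by
  induction w with
  | nil => exact S.grade_nil
  | cons s w ih => exact (S.grade_apply s _).trans (congrArg s.grow ih)

theorem injOn_eval : Set.InjOn S.eval {w | IsStepWord w} := by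
  intro w hw w' hw' h
  have head_eq {v v' : List Step} (hv : IsStepWord v) (hv' : IsStepWord v')
      (h : S.eval v = S.eval v') : v.head? = v'.head? := by
    rw [← (S.mem_eval_and_last_eval hv).2, h, (S.mem_eval_and_last_eval hv').2]
  induction w generalizing w' with
  | nil => exact (List.head?_eq_none_iff.1 (head_eq hw hw' h).symm).symm
  | cons s w ih =>
    obtain ⟨v, rfl⟩ := List.head?_eq_some_iff.1 (head_eq hw hw' h).symm
    rw [ih hw.2 hw'.2 (S.apply_injective s h)]

theorem size_lt_size_apply {s : Step} {x : α} (hx : S.Mem x) (hs : s.CanFollow (S.last x)) :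
    (S.grade x).2 < (S.grade (S.apply s x)).2 := by
  rw [S.grade_apply]
  refine Step.snd_lt_snd_grow ?_
  rintro rfl hlen
  exact hs ((S.last_eq_none_iff hx).2 (S.eq_nil_of_length_eq_zero hx hlen))

theorem exists_eval_eq {x : α} (hx : S.Mem x) : ∃ w, IsStepWord w ∧ S.eval w = x := by
  induction hn : (S.grade x).2 using Nat.strong_induction_on generalizing x with
  | _ n ih =>
    cases hlast : S.last x with
    | none => exact ⟨[], trivial, ((S.last_eq_none_iff hx).1 hlast).symm⟩
    | some s =>
      obtain ⟨y, hy, hs, rfl⟩ := S.exists_apply_eq hx hlast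
      obtain ⟨w, hw, rfl⟩ := ih _ (hn ▸ S.size_lt_size_apply hy hs) hy rfl
      exact ⟨s :: w, ⟨(S.mem_eval_and_last_eval hw).2 ▸ hs, hw⟩, rfl⟩

theorem bijOn_eval (n : ℕ) :
    Set.BijOn S.eval {w | IsStepWord w ∧ (w.foldr Step.grow (0, 0)).2 = n}
      {x | S.Mem x ∧ (S.grade x).2 = n} := by
  refine ⟨fun w hw => ⟨(S.mem_eval_and_last_eval hw.1).1, ?_⟩,
    S.injOn_eval.mono fun w hw => hw.1, ?_⟩
  · rw [S.grade_eval, hw.2]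
  · rintro x ⟨hx, hn⟩
    obtain ⟨w, hw, rfl⟩ := S.exists_eval_eq hx
    exact ⟨w, ⟨hw, by rw [← S.grade_eval, hn]⟩, rfl⟩

theorem ncard_eq_ncard (n : ℕ) :
    {x | S.Mem x ∧ (S.grade x).2 = n}.ncard = {y | T.Mem y ∧ (T.grade y).2 = n}.ncard :=
  (S.bijOn_eval n).ncard_eq.symm.trans (T.bijOn_eval n).ncard_eq

end StepSystem

/-- The multiset obtained by increasing every element of `t` by one and adding `k` ones. -/
def prependOnes (k : ℕ) (t : Multiset ℕ) : Multiset ℕ :=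
  Multiset.replicate k 1 + t.map (· + 1)

theorem map_map_eq_self {α β : Type*} {f : α → β} {g : β → α} {s : Multiset α}
    (h : ∀ a ∈ s, g (f a) = a) : (s.map f).map g = s := by
  rw [Multiset.map_map]
  exact (Multiset.map_congr rfl h).trans (Multiset.map_id s)

section prependOnes

variable {k : ℕ} {s t : Multiset ℕ}

theorem count_succ_prependOnes (k : ℕ) (t : Multiset ℕ) (i : ℕ) :
    (prependOnes k t).count (i + 1) = (if i = 0 then k else 0) + t.count i := by
  rw [prependOnes, Multiset.count_add, Multiset.count_replicate,
    Multiset.count_map_eq_count' (· + 1) t (add_left_injective 1)]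
  simp only [right_eq_add]

theorem zero_notMem_prependOnes (k : ℕ) (t : Multiset ℕ) : 0 ∉ prependOnes k t := by
  simp [prependOnes, Multiset.mem_replicate]

theorem count_one_prependOnes (ht : 0 ∉ t) : (prependOnes k t).count 1 = k := by
  rw [count_succ_prependOnes k t 0, if_pos rfl, Multiset.count_eq_zero_of_notMem ht, add_zero]

theorem one_mem_prependOnes_iff (ht : 0 ∉ t) : 1 ∈ prependOnes k t ↔ k ≠ 0 := by
  rw [← Multiset.count_ne_zero, count_one_prependOnes ht]

theorem card_prependOnes (k : ℕ) (t : Multiset ℕ) : (prependOnes k t).card = t.card + k := by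
  simp [prependOnes, add_comm]

theorem sum_prependOnes (k : ℕ) (t : Multiset ℕ) :
    (prependOnes k t).sum = t.sum + t.card + k := by
  simp [prependOnes, Multiset.sum_map_add, add_comm]

theorem prependOnes_injective (k : ℕ) : Function.Injective (prependOnes k) := fun _ _ h =>
  Multiset.map_injective (add_left_injective 1) (add_left_cancel h)

theorem exists_prependOnes_eq (hs : 0 ∉ s) :
    ∃ t, 0 ∉ t ∧ prependOnes (s.count 1) t = s := by
  refine ⟨(s.filter (1 ≠ ·)).map (· - 1), ?_, ?_⟩
  · simp only [Multiset.mem_map, Multiset.mem_filter, not_exists, not_and, and_imp]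
    rintro a ha h1 h0
    have : a ≠ 0 := fun h => hs (h ▸ ha)
    omega
  · have hmap : ((s.filter (1 ≠ ·)).map (· - 1)).map (· + 1) = s.filter (1 ≠ ·) :=
      map_map_eq_self fun a ha => Nat.sub_add_cancel
        (Nat.pos_of_ne_zero fun h => hs (h ▸ Multiset.mem_of_mem_filter ha))
    rw [prependOnes, hmap, ← Multiset.filter_eq, Multiset.filter_add_not]

theorem nodup_prependOnes_iff (ht : 0 ∉ t) : (prependOnes k t).Nodup ↔ k ≤ 1 ∧ t.Nodup := by
  simp only [Multiset.nodup_iff_count_le_one]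
  refine ⟨fun h => ⟨(count_one_prependOnes ht).ge.trans (h 1), fun i => ?_⟩, fun ⟨hk, h⟩ i => ?_⟩
  · have := count_succ_prependOnes k t i ▸ h (i + 1)
    omega
  · rcases i with _ | _ | i
    · simp [Multiset.count_eq_zero_of_notMem (zero_notMem_prependOnes k t)]
    · rwa [count_one_prependOnes ht]
    · simpa [count_succ_prependOnes] using h (i + 1)

end prependOnes

/-- Gordon's condition on the multiset of parts. The case `j = 0` of the second clause only says
that `1` appears at most twice. -/
def IsGordon (s : Multiset ℕ) : Prop :=
  0 ∉ s ∧ ∀ j, s.count j + s.count (j + 1) ≤ 2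

theorem isGordon_iff_of_zero_notMem {s : Multiset ℕ} (hs : 0 ∉ s) :
    IsGordon s ↔ ∀ j, 1 ≤ j → s.count j + s.count (j + 1) ≤ 2 := by
  refine ⟨fun h j _ => h.2 j, fun h => ⟨hs, fun j => ?_⟩⟩
  rcases j with _ | j
  · have := h 1 le_rfl
    rw [Multiset.count_eq_zero_of_notMem hs, zero_add, zero_add]
    omega
  · exact h _ (by omega)

theorem isGordon_prependOnes_iff {k : ℕ} {t : Multiset ℕ} (ht : 0 ∉ t) :
    IsGordon (prependOnes k t) ↔ k + t.count 1 ≤ 2 ∧ IsGordon t := by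
  have h0 := Multiset.count_eq_zero_of_notMem ht
  rw [isGordon_iff_of_zero_notMem (zero_notMem_prependOnes k t),
    isGordon_iff_of_zero_notMem ht]
  constructor
  · intro h
    refine ⟨?_, fun j hj => ?_⟩
    · simpa [count_succ_prependOnes, h0, count_one_prependOnes ht] using h 1 le_rfl
    · have := h (j + 1) (by omega)
      rw [count_succ_prependOnes, count_succ_prependOnes] at this
      omega
  · rintro ⟨h1, h⟩ j hj
    obtain ⟨j, rfl⟩ := Nat.exists_eq_add_of_le' hj
    rcases j with _ | j
    · simpa [count_succ_prependOnes, h0] using h1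
    · simpa [count_succ_prependOnes] using h (j + 1) (by omega)

/-- The operations on Gordon partitions. After `pair` the old parts have to be at least `3`. -/
def gordonApply : Step → Multiset ℕ → Multiset ℕ
  | .pair, t => prependOnes 2 (prependOnes 0 t)
  | .shift, t => prependOnes 0 t
  | .single, t => prependOnes 1 t

/-- The last operation in the construction of a Gordon partition: the number of ones tells. -/
def gordonLast (s : Multiset ℕ) : Option Step :=
  if 2 ≤ s.count 1 then some .pair
  else if 1 ≤ s.count 1 then some .single
  else if s = 0 then none else some .shift

theorem gordonLast_eq_none_iff {s : Multiset ℕ} : gordonLast s = none ↔ s = 0 := by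
  unfold gordonLast
  split_ifs with h2 h1 h0
  · simpa using fun h : s = 0 => by simp [h] at h2
  · simpa using fun h : s = 0 => by simp [h] at h1
  · simpa using h0
  · simpa using h0

theorem gordonLast_eq_pair_iff {s : Multiset ℕ} :
    gordonLast s = some .pair ↔ 2 ≤ s.count 1 := by
  unfold gordonLast
  split_ifs with h2 h1 h0 <;> simp [h2]

theorem gordonLast_eq_single_iff {s : Multiset ℕ} :
    gordonLast s = some .single ↔ s.count 1 = 1 := by
  unfold gordonLast
  split_ifs <;> simp <;> omega

theorem gordonLast_eq_shift_iff {s : Multiset ℕ} :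
    gordonLast s = some .shift ↔ s.count 1 = 0 ∧ s ≠ 0 := by
  unfold gordonLast
  split_ifs with h2 h1 h0
  · simp only [Option.some.injEq, reduceCtorEq, false_iff]
    omega
  · simp only [Option.some.injEq, reduceCtorEq, false_iff]
    omega
  · simp [h0]
  · simpa [h0] using h1

theorem isGordon_gordonApply {s : Step} {t : Multiset ℕ} (ht : IsGordon t)
    (hs : s.CanFollow (gordonLast t)) : IsGordon (gordonApply s t) := by
  have hcount : t.count 1 ≤ 2 := by simpa [ht.1] using ht.2 0
  cases s with
  | pair =>
    refine (isGordon_prependOnes_iff (zero_notMem_prependOnes 0 t)).2 ⟨?_, ?_⟩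
    · rw [count_one_prependOnes ht.1]
    · exact (isGordon_prependOnes_iff ht.1).2 ⟨by omega, ht⟩
  | shift => exact (isGordon_prependOnes_iff ht.1).2 ⟨by omega, ht⟩
  | single =>
    have := gordonLast_eq_pair_iff.not.1 hs
    exact (isGordon_prependOnes_iff ht.1).2 ⟨by omega, ht⟩

theorem gordonLast_gordonApply {s : Step} {t : Multiset ℕ} (ht : IsGordon t)
    (hs : s.CanFollow (gordonLast t)) : gordonLast (gordonApply s t) = some s := by
  cases s with
  | pair =>
    exact gordonLast_eq_pair_iff.2 (count_one_prependOnes (zero_notMem_prependOnes 0 t)).ge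
  | shift =>
    refine gordonLast_eq_shift_iff.2 ⟨count_one_prependOnes ht.1, fun h => hs ?_⟩
    rw [gordonLast_eq_none_iff, ← Multiset.card_eq_zero]
    exact (card_prependOnes 0 t).symm.trans (Multiset.card_eq_zero.2 h)
  | single => exact gordonLast_eq_single_iff.2 (count_one_prependOnes ht.1)

theorem exists_gordonApply_eq {s : Step} {t : Multiset ℕ} (ht : IsGordon t)
    (hs : gordonLast t = some s) :
    ∃ u, IsGordon u ∧ s.CanFollow (gordonLast u) ∧ gordonApply s u = t := by
  obtain ⟨u, hu0, hut⟩ := exists_prependOnes_eq ht.1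
  obtain ⟨hcount, hu⟩ := (isGordon_prependOnes_iff hu0).1 (hut ▸ ht)
  cases s with
  | pair =>
    have h2 := gordonLast_eq_pair_iff.1 hs
    obtain ⟨v, hv0, hvu⟩ := exists_prependOnes_eq hu0
    rw [show u.count 1 = 0 by omega] at hvu
    rw [show t.count 1 = 2 by omega] at hut
    subst hvu hut
    exact ⟨v, ((isGordon_prependOnes_iff hv0).1 hu).2, trivial, rfl⟩
  | shift =>
    obtain ⟨h0, hne⟩ := gordonLast_eq_shift_iff.1 hs
    rw [h0] at hut
    subst hut
    exact ⟨u, hu, gordonLast_eq_none_iff.not.2 fun h => hne (by rw [h]; rfl), rfl⟩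
  | single =>
    rw [gordonLast_eq_single_iff.1 hs] at hut hcount
    exact ⟨u, hu, gordonLast_eq_pair_iff.not.2 (by omega), hut⟩

/-- Gordon partitions as a step system, graded by number of parts and sum. -/
def gordonSystem : StepSystem (Multiset ℕ) where
  Mem := IsGordon
  nil := 0
  apply := gordonApply
  last := gordonLast
  grade s := (s.card, s.sum)
  mem_nil := by simp [IsGordon]
  mem_apply := isGordon_gordonApply
  last_eq_none_iff _ := gordonLast_eq_none_iff
  last_apply := gordonLast_gordonApply
  exists_apply_eq := exists_gordonApply_eq
  apply_injective
    | .pair => (prependOnes_injective 2).comp (prependOnes_injective 0)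
    | .shift => prependOnes_injective 0
    | .single => prependOnes_injective 1
  grade_nil := rfl
  grade_apply s t := by
    cases s <;> simp [gordonApply, Step.grow, card_prependOnes, sum_prependOnes]; ring
  eq_nil_of_length_eq_zero _ := Multiset.card_eq_zero.1

/-- The data `(rank, evens, tail)` encoding a partition of the second family: the odd parts
below `2 * rank` are `1, 1, 3, 3, …`, the even parts up to `2 * rank` are the doubles of `evens`,
and the parts above `2 * rank` are those of `tail` increased by `2 * rank`. -/
@[ext]
structure A3Code where
  rank : ℕ
  evens : Multiset ℕ
  tail : Multiset ℕ

namespace A3Code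

/-- The constraints on the data of an actual partition. -/
structure IsValid (x : A3Code) : Prop where
  mem_Icc_of_mem_evens : ∀ e ∈ x.evens, e ∈ Set.Icc 1 x.rank
  nodup_tail : x.tail.Nodup
  zero_notMem_tail : 0 ∉ x.tail

/-- The length of the Gordon partition corresponding to `x`; it is not the number of parts of the
partition encoded by `x`, since even parts up to `2 * rank` do not contribute. -/
def length (x : A3Code) : ℕ :=
  2 * x.rank + x.tail.card

/-- The sum of the partition encoded by `x`. -/
def size (x : A3Code) : ℕ :=
  2 * x.rank ^ 2 + 2 * x.evens.sum + x.tail.sum + 2 * x.rank * x.tail.card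

/-- The operations on codes. For `rank = 0` there is no even part `2 * rank` to be added. -/
def apply : Step → A3Code → A3Code
  | .pair, x => ⟨x.rank + 1, x.evens, x.tail⟩
  | .shift, x =>
    ⟨x.rank, if x.rank = 0 then x.evens else x.rank ::ₘ x.evens, prependOnes 0 x.tail⟩
  | .single, x => ⟨x.rank, x.evens, prependOnes 1 x.tail⟩

/-- The last operation in the construction of a code. -/
def last (x : A3Code) : Option Step :=
  if x.rank ≠ 0 ∧ x.rank ∉ x.evens then some .pair
  else if 1 ∈ x.tail then some .single
  else if x.length = 0 then none else some .shift

variable {x : A3Code} {s : Step}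

theorem last_eq_pair_iff : x.last = some .pair ↔ x.rank ≠ 0 ∧ x.rank ∉ x.evens := by
  unfold last
  split_ifs with h <;> simp [h]

theorem last_eq_single_iff :
    x.last = some .single ↔ (x.rank = 0 ∨ x.rank ∈ x.evens) ∧ 1 ∈ x.tail := by
  unfold last
  split_ifs <;> simp <;> tauto

theorem last_eq_shift_iff :
    x.last = some .shift ↔ (x.rank = 0 ∨ x.rank ∈ x.evens) ∧ 1 ∉ x.tail ∧ x.length ≠ 0 := by
  unfold last
  split_ifs <;> simp <;> tauto

theorem last_eq_none_iff_length : x.last = none ↔ x.length = 0 := by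
  unfold last
  split_ifs with hp h1 h0
  · simp [length, hp.1]
  · simpa [length] using fun _ => ne_of_mem_of_not_mem' h1 (Multiset.notMem_zero 1)
  · simpa
  · simpa

theorem IsValid.eq_nil_of_length_eq_zero (hx : x.IsValid) (h : x.length = 0) :
    x = ⟨0, 0, 0⟩ := by
  obtain ⟨hrank, htail⟩ := Nat.add_eq_zero_iff.1 h
  have hrank : x.rank = 0 := by omega
  refine A3Code.ext hrank (Multiset.eq_zero_of_forall_notMem fun e he => ?_)
    (Multiset.card_eq_zero.1 htail)
  have := hx.mem_Icc_of_mem_evens e he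
  rw [Set.mem_Icc] at this
  omega

theorem IsValid.last_eq_none_iff (hx : x.IsValid) : x.last = none ↔ x = ⟨0, 0, 0⟩ :=
  last_eq_none_iff_length.trans ⟨hx.eq_nil_of_length_eq_zero, fun h => h ▸ rfl⟩

theorem IsValid.apply (hx : x.IsValid) : (apply s x).IsValid := by
  cases s with
  | pair =>
    exact ⟨fun e he => Set.Icc_subset_Icc_right (Nat.le_succ _) (hx.mem_Icc_of_mem_evens e he),
      hx.nodup_tail, hx.zero_notMem_tail⟩
  | shift =>
    refine ⟨fun e he => ?_, (nodup_prependOnes_iff hx.zero_notMem_tail).2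
      ⟨zero_le_one, hx.nodup_tail⟩, zero_notMem_prependOnes 0 _⟩
    simp only [A3Code.apply] at he ⊢
    split_ifs at he with hrank
    · exact hx.mem_Icc_of_mem_evens e he
    · rcases Multiset.mem_cons.1 he with rfl | he
      · exact ⟨Nat.pos_of_ne_zero hrank, le_rfl⟩
      · exact hx.mem_Icc_of_mem_evens e he
  | single =>
    exact ⟨hx.mem_Icc_of_mem_evens, (nodup_prependOnes_iff hx.zero_notMem_tail).2
      ⟨le_rfl, hx.nodup_tail⟩, zero_notMem_prependOnes 1 _⟩

theorem IsValid.last_apply (hx : x.IsValid) (hs : s.CanFollow x.last) :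
    (A3Code.apply s x).last = some s := by
  cases s with
  | pair =>
    refine last_eq_pair_iff.2 ⟨Nat.succ_ne_zero _, fun h => ?_⟩
    exact Nat.not_succ_le_self _ (hx.mem_Icc_of_mem_evens _ h).2
  | shift =>
    refine last_eq_shift_iff.2 ⟨?_, ?_, ?_⟩
    · by_cases h : x.rank = 0 <;> simp [A3Code.apply, h]
    · simp [A3Code.apply, one_mem_prependOnes_iff hx.zero_notMem_tail]
    · simpa [A3Code.apply, length, card_prependOnes] using last_eq_none_iff_length.not.1 hs
  | single =>
    refine last_eq_single_iff.2 ⟨?_, (one_mem_prependOnes_iff hx.zero_notMem_tail).2 one_ne_zero⟩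
    have := last_eq_pair_iff.not.1 hs
    simp only [A3Code.apply]
    tauto

theorem IsValid.exists_apply_eq (hx : x.IsValid) (hs : x.last = some s) :
    ∃ y : A3Code, y.IsValid ∧ s.CanFollow y.last ∧ A3Code.apply s y = x := by
  obtain ⟨j, E, D⟩ := x
  obtain ⟨D', hD'0, hD'⟩ := exists_prependOnes_eq hx.zero_notMem_tail
  have hD'nodup : D'.Nodup := ((nodup_prependOnes_iff hD'0).1 (hD'.symm ▸ hx.nodup_tail)).2
  cases s with
  | pair =>
    obtain ⟨hj, hjE⟩ := last_eq_pair_iff.1 hs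
    obtain ⟨j, rfl⟩ := Nat.exists_eq_succ_of_ne_zero hj
    refine ⟨⟨j, E, D⟩, ⟨fun e he => ?_, hx.nodup_tail, hx.zero_notMem_tail⟩, trivial, rfl⟩
    obtain ⟨h1, hle⟩ := hx.mem_Icc_of_mem_evens e he
    exact ⟨h1, Nat.le_of_lt_succ (hle.lt_of_ne fun h => hjE (h ▸ he))⟩
  | shift =>
    obtain ⟨hj, h1, hlen⟩ := last_eq_shift_iff.1 hs
    rw [Multiset.count_eq_zero_of_notMem h1] at hD'
    obtain rfl := hD'
    refine ⟨⟨j, if j = 0 then E else E.erase j, D'⟩, ⟨fun e he => ?_, hD'nodup, hD'0⟩, ?_, ?_⟩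
    · refine hx.mem_Icc_of_mem_evens e ?_
      dsimp only at he ⊢
      split_ifs at he
      · exact he
      · exact Multiset.mem_of_mem_erase he
    · refine last_eq_none_iff_length.not.2 ?_
      simpa [length, card_prependOnes] using hlen
    · by_cases h : j = 0
      · simp [A3Code.apply, h]
      · simp [A3Code.apply, h, Multiset.cons_erase (hj.resolve_left h)]
  | single =>
    obtain ⟨hj, h1⟩ := last_eq_single_iff.1 hs
    rw [Multiset.count_eq_one_of_mem hx.nodup_tail h1] at hD'
    obtain rfl := hD'
    refine ⟨⟨j, E, D'⟩, ⟨hx.mem_Icc_of_mem_evens, hD'nodup, hD'0⟩, ?_, rfl⟩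
    exact last_eq_pair_iff.not.2 (by tauto)

theorem apply_injective (s : Step) : Function.Injective (apply s) := by
  rintro ⟨j, E, D⟩ ⟨j', E', D'⟩ h
  cases s with
  | pair => simpa [apply] using h
  | shift =>
    simp only [apply, A3Code.mk.injEq, (prependOnes_injective 0).eq_iff] at h
    obtain ⟨rfl, hE, rfl⟩ := h
    split_ifs at hE
    · rw [hE]
    · rw [(Multiset.cons_inj_right j).1 hE]
  | single => simpa [apply, (prependOnes_injective 1).eq_iff] using h

theorem grade_apply (s : Step) (x : A3Code) :
    ((apply s x).length, (apply s x).size) = s.grow (x.length, x.size) := by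
  cases s with
  | pair =>
    simp only [apply, Step.grow, length, size, Prod.mk.injEq]
    constructor <;> ring
  | shift =>
    simp only [apply, Step.grow, length, size, card_prependOnes, sum_prependOnes, Prod.mk.injEq]
    split_ifs with h
    · simp [h, add_assoc]
    · rw [Multiset.sum_cons]
      constructor <;> ring
  | single =>
    simp only [apply, Step.grow, length, size, card_prependOnes, sum_prependOnes, Prod.mk.injEq]
    constructor <;> ring

/-- Valid codes as a step system. -/
def system : StepSystem A3Code where
  Mem := IsValid
  nil := ⟨0, 0, 0⟩
  apply := apply
  last := last
  grade x := (x.length, x.size)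
  mem_nil := ⟨by simp, by simp, by simp⟩
  mem_apply hx _ := hx.apply
  last_eq_none_iff := IsValid.last_eq_none_iff
  last_apply := IsValid.last_apply
  exists_apply_eq := IsValid.exists_apply_eq
  apply_injective := apply_injective
  grade_nil := rfl
  grade_apply := grade_apply
  eq_nil_of_length_eq_zero := IsValid.eq_nil_of_length_eq_zero

end A3Code

/-- The second family with witness `j`, on the multiset of parts. -/
def IsA3 (j : ℕ) (s : Multiset ℕ) : Prop :=
  (∀ o, Odd o → o < 2 * j → s.count o = 2) ∧ ∀ p, 2 * j < p → s.count p ≤ 1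

theorem IsA3.le {j j' : ℕ} {s : Multiset ℕ} (h : IsA3 j s) (h' : IsA3 j' s) : j' ≤ j := by
  by_contra! hlt
  have hle := h.2 (2 * j + 1) (by omega)
  have htwo := h'.1 (2 * j + 1) (odd_two_mul_add_one j) (by omega)
  omega

/-- The odd numbers `1, 3, …, 2 * j - 1`. -/
def odds (j : ℕ) : Multiset ℕ :=
  (Multiset.range j).map (2 * · + 1)

theorem sum_odds (j : ℕ) : (odds j).sum = j ^ 2 := by
  induction j with
  | zero => rfl
  | succ j ih =>
    rw [odds] at ih ⊢
    rw [Multiset.range_succ, Multiset.map_cons, Multiset.sum_cons, ih]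
    ring

theorem count_odds (j p : ℕ) : (odds j).count p = if Odd p ∧ p < 2 * j then 1 else 0 := by
  have hinj : Function.Injective (2 * · + 1 : ℕ → ℕ) := fun a b h => by
    dsimp only at h
    omega
  rw [odds, Multiset.count_eq_of_nodup ((Multiset.nodup_range j).map hinj)]
  congr 1
  simp only [Multiset.mem_map, Multiset.mem_range, eq_iff_iff]
  constructor
  · rintro ⟨i, hi, rfl⟩
    exact ⟨odd_two_mul_add_one i, by omega⟩
  · rintro ⟨⟨i, rfl⟩, h⟩
    exact ⟨i, by omega, rfl⟩

namespace A3Code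

/-- The multiset of parts encoded by `x`. -/
def parts (x : A3Code) : Multiset ℕ :=
  2 • odds x.rank + x.evens.map (2 * ·) + x.tail.map (· + 2 * x.rank)

variable {x y : A3Code}

theorem sum_parts (x : A3Code) : x.parts.sum = x.size := by
  have hevens : (x.evens.map (2 * ·)).sum = 2 * x.evens.sum := by
    rw [Multiset.sum_map_mul_left, Multiset.map_id']
  simp only [parts, size, Multiset.sum_add, Multiset.sum_nsmul, sum_odds, hevens,
    Multiset.sum_map_add, Multiset.map_id', Multiset.map_const',
    Multiset.sum_replicate, smul_eq_mul]
  ring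

theorem count_parts_of_odd {o : ℕ} (ho : Odd o) (hlt : o < 2 * x.rank) :
    x.parts.count o = 2 := by
  have hevens : o ∉ x.evens.map (2 * ·) := by
    rw [Multiset.mem_map]
    rintro ⟨e, -, rfl⟩
    exact Nat.not_odd_iff_even.2 (even_two_mul e) ho
  have htail : o ∉ x.tail.map (· + 2 * x.rank) := by
    rw [Multiset.mem_map]
    rintro ⟨d, -, rfl⟩
    omega
  simp [parts, count_odds, ho, hlt, Multiset.count_eq_zero_of_notMem hevens,
    Multiset.count_eq_zero_of_notMem htail]

theorem IsValid.count_parts_two_mul (hx : x.IsValid) {e : ℕ} (he : e ≤ x.rank) :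
    x.parts.count (2 * e) = x.evens.count e := by
  have htail : 2 * e ∉ x.tail.map (· + 2 * x.rank) := by
    rw [Multiset.mem_map]
    rintro ⟨d, hd, h⟩
    exact hx.zero_notMem_tail ((show d = 0 by omega) ▸ hd)
  have hevens : (x.evens.map (2 * ·)).count (2 * e) = x.evens.count e :=
    Multiset.count_map_eq_count' _ _ (mul_right_injective₀ two_ne_zero) e
  simp [parts, count_odds, hevens, Multiset.count_eq_zero_of_notMem htail]

theorem IsValid.count_parts_add (hx : x.IsValid) {d : ℕ} (hd : d ≠ 0) :
    x.parts.count (d + 2 * x.rank) = x.tail.count d := by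
  have hevens : d + 2 * x.rank ∉ x.evens.map (2 * ·) := by
    rw [Multiset.mem_map]
    rintro ⟨e, he, h⟩
    have := (hx.mem_Icc_of_mem_evens e he).2
    omega
  have htail : (x.tail.map (· + 2 * x.rank)).count (d + 2 * x.rank) = x.tail.count d :=
    Multiset.count_map_eq_count' _ _ (add_left_injective _) d
  simp [parts, count_odds, htail, Multiset.count_eq_zero_of_notMem hevens]

theorem IsValid.zero_notMem_evens (hx : x.IsValid) : 0 ∉ x.evens := fun h =>
  absurd (hx.mem_Icc_of_mem_evens 0 h).1 (by decide)

theorem IsValid.zero_notMem_parts (hx : x.IsValid) : 0 ∉ x.parts := by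
  rw [← Multiset.count_eq_zero]
  exact (hx.count_parts_two_mul (Nat.zero_le _)).trans
    (Multiset.count_eq_zero_of_notMem hx.zero_notMem_evens)

theorem IsValid.isA3_parts (hx : x.IsValid) : IsA3 x.rank x.parts := by
  refine ⟨fun o ho hlt => count_parts_of_odd ho hlt, fun p hp => ?_⟩
  obtain ⟨d, rfl⟩ := Nat.exists_eq_add_of_le' hp.le
  rw [hx.count_parts_add (by omega)]
  exact Multiset.nodup_iff_count_le_one.1 hx.nodup_tail d

theorem injOn_parts : Set.InjOn parts {x | x.IsValid} := by
  intro x hx y hy h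
  have hrank : x.rank = y.rank :=
    le_antisymm (hy.isA3_parts.le (h ▸ hx.isA3_parts)) (hx.isA3_parts.le (h ▸ hy.isA3_parts))
  refine A3Code.ext hrank (Multiset.ext.2 fun e => ?_) (Multiset.ext.2 fun d => ?_)
  · by_cases he : e ≤ x.rank
    · rw [← hx.count_parts_two_mul he, h, hy.count_parts_two_mul (hrank ▸ he)]
    · rw [Multiset.count_eq_zero_of_notMem fun hm => he (hx.mem_Icc_of_mem_evens e hm).2,
        Multiset.count_eq_zero_of_notMem fun hm =>
          he (hrank ▸ (hy.mem_Icc_of_mem_evens e hm).2)]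
  · by_cases hd : d = 0
    · rw [hd, Multiset.count_eq_zero_of_notMem hx.zero_notMem_tail,
        Multiset.count_eq_zero_of_notMem hy.zero_notMem_tail]
    · rw [← hx.count_parts_add hd, h, hrank, hy.count_parts_add hd]

/-- The code of a multiset of parts belonging to the second family with witness `j`. -/
def ofParts (j : ℕ) (s : Multiset ℕ) : A3Code where
  rank := j
  evens := (s.filter fun p => Even p ∧ p ≤ 2 * j).map (· / 2)
  tail := (s.filter (2 * j < ·)).map (· - 2 * j)

theorem parts_ofParts {j : ℕ} {s : Multiset ℕ} (h : IsA3 j s) : (ofParts j s).parts = s := by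
  have hevens : (ofParts j s).evens.map (2 * ·) = s.filter fun p => Even p ∧ p ≤ 2 * j :=
    map_map_eq_self fun p hp => Nat.two_mul_div_two_of_even (Multiset.mem_filter.1 hp).2.1
  have htail : (ofParts j s).tail.map (· + 2 * j) = s.filter (2 * j < ·) :=
    map_map_eq_self fun p hp => Nat.sub_add_cancel (Multiset.mem_filter.1 hp).2.le
  ext p
  have hodd := h.1 p
  rw [parts, hevens, show (ofParts j s).rank = j from rfl, htail]
  simp only [Multiset.count_add, Multiset.count_nsmul, count_odds, Multiset.count_filter,
    ← Nat.not_odd_iff_even]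
  grind

theorem isValid_ofParts {j : ℕ} {s : Multiset ℕ} (hs : 0 ∉ s) (h : IsA3 j s) :
    (ofParts j s).IsValid where
  mem_Icc_of_mem_evens e he := by
    obtain ⟨p, hp, rfl⟩ := Multiset.mem_map.1 he
    obtain ⟨hps, ⟨q, rfl⟩, hle⟩ := Multiset.mem_filter.1 hp
    have : q ≠ 0 := by
      rintro rfl
      exact hs hps
    simp only [ofParts, Set.mem_Icc]
    omega
  nodup_tail := by
    refine Multiset.Nodup.map_on (fun p hp q hq hpq => ?_)
      (Multiset.nodup_iff_count_le_one.2 fun p => ?_)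
    · have := (Multiset.mem_filter.1 hp).2
      have := (Multiset.mem_filter.1 hq).2
      omega
    · rw [Multiset.count_filter]
      split_ifs with hp
      · exact h.2 p hp
      · exact zero_le_one
  zero_notMem_tail h0 := by
    obtain ⟨p, hp, hp0⟩ := Multiset.mem_map.1 h0
    have := (Multiset.mem_filter.1 hp).2
    omega

theorem bijOn_parts (n : ℕ) :
    Set.BijOn parts {x | x.IsValid ∧ x.size = n} {s | 0 ∉ s ∧ s.sum = n ∧ ∃ j, IsA3 j s} := by
  refine ⟨fun x hx => ⟨hx.1.zero_notMem_parts, x.sum_parts.trans hx.2, x.rank,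
    hx.1.isA3_parts⟩, injOn_parts.mono fun x hx => hx.1, ?_⟩
  rintro s ⟨h0, hn, j, hj⟩
  refine ⟨ofParts j s, ⟨isValid_ofParts h0 hj, ?_⟩, parts_ofParts hj⟩
  rw [← sum_parts, parts_ofParts hj, hn]

end A3Code

theorem card_partition_eq_ncard (n : ℕ) (P : Multiset ℕ → Prop) :
    Nat.card {π : n.Partition // P π.parts} = {s | 0 ∉ s ∧ s.sum = n ∧ P s}.ncard :=
  Nat.card_congr
    { toFun π := ⟨π.1.parts, fun h => (π.1.parts_pos h).false, π.1.parts_sum, π.2⟩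
      invFun s := ⟨⟨s.1, fun hi => Nat.pos_of_ne_zero fun h => s.2.1 (h ▸ hi), s.2.2.1⟩, s.2.2.2⟩ }

theorem exists_isA3_iff {s : Multiset ℕ} :
    (∃ j, IsA3 j s) ↔ ∃ j, (∀ o, Odd o → o < 2 * j → s.count o = 2) ∧
      (∀ o, Odd o → 2 * j - 1 < o → s.count o ≤ 1) ∧ ∀ p, 2 * j < p → s.count p ≤ 1 := by
  refine exists_congr fun j => and_congr_right fun _ => (and_iff_right_of_imp ?_).symm
  rintro hlarge o ⟨i, rfl⟩ hlt
  exact hlarge _ (by omega)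

/-- The bijection `f̄ : 𝒢₃ → 𝒜₃`: the number of partitions of `n` counted by Gordon's
`G_{3,3}(n)` (`j` and `j+1` together appear at most twice for every `j ≥ 1`) equals the number
counted by `A₃(n)` (there exists `j ≥ 0` such that each odd integer `1, 3, …, 2j-1` appears
exactly twice, no odd integer greater than `2j-1` is repeated, and no part greater than `2j`
appears more than once). -/
theorem G33_eq_A3 (n : ℕ) :
    Nat.card {π : n.Partition //
        ∀ j, 1 ≤ j → π.parts.count j + π.parts.count (j + 1) ≤ 2} =
      Nat.card {π : n.Partition //
        ∃ j : ℕ,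
          (∀ o, Odd o → o < 2 * j → π.parts.count o = 2) ∧
          (∀ o, Odd o → 2 * j - 1 < o → π.parts.count o ≤ 1) ∧
          (∀ p, 2 * j < p → π.parts.count p ≤ 1)} := by
  calc
    _ = {s : Multiset ℕ | 0 ∉ s ∧ s.sum = n ∧
          ∀ j, 1 ≤ j → s.count j + s.count (j + 1) ≤ 2}.ncard := card_partition_eq_ncard n _
    _ = {s | IsGordon s ∧ s.sum = n}.ncard := by
      congr 1 with s
      exact ⟨fun ⟨h0, hn, h⟩ => ⟨(isGordon_iff_of_zero_notMem h0).2 h, hn⟩,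
        fun ⟨h, hn⟩ => ⟨h.1, hn, (isGordon_iff_of_zero_notMem h.1).1 h⟩⟩
    _ = {x : A3Code | x.IsValid ∧ x.size = n}.ncard :=
      gordonSystem.ncard_eq_ncard A3Code.system n
    _ = {s | 0 ∉ s ∧ s.sum = n ∧ ∃ j, IsA3 j s}.ncard := (A3Code.bijOn_parts n).ncard_eq
    _ = _ := by
      simp only [exists_isA3_iff]
      exact (card_partition_eq_ncard n _).symm
end
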